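/- arXiv:2005.04354 — 3 statements merged into one kernel-verified Lean document; each statement's English description precedes it below -/
import Mathlib

section
/- Let p ≥ 3, θ ∈ (0, 1/2), let T be a tree on {1,…,p}, and let x_1,…,x_n be i.i.d. samples from P_{T,θ} (probabilities taken under the n-fold product measure). Let B_n be the event that there exists a spanning tree T' of the complete graph on {1,…,p} with E(T') ≠ E(T) and ∑_{e∈E(T')} Â_e ≥ ∑_{e∈E(T)} Â_e, i.e. the event that T is not the unique maximum-weight spanning tree for the weights Â. Then lim_{n→∞} −(1/n)·log ℙ(B_n) = −log(1 − θ·(1 − √(4θ(1−θ)))). In particular the error exponent depends only on θ and not on p or on the structure of T. -/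
open scoped Classical BigOperators
open Filter

noncomputable section

/-- Symmetric pair weight `w(x i, x j)` lifted to unordered pairs. -/
def pairWeight (θ : ℝ) {p : ℕ} (x : Fin p → Bool) : Sym2 (Fin p) → ℝ :=
  Sym2.lift ⟨fun i j => if x i = x j then 1 - θ else θ, fun i j => by
    dsimp only
    by_cases h : x i = x j
    · rw [if_pos h, if_pos h.symm]
    · rw [if_neg h, if_neg (fun hh => h hh.symm)]⟩

/-- The homogeneous zero-external-field Ising tree distribution. -/
def isingP (θ : ℝ) {p : ℕ} (T : SimpleGraph (Fin p)) (x : Fin p → Bool) : ℝ :=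
  (1 / 2) * ∏ e ∈ T.edgeFinset, pairWeight θ x e

/-- Probability of an event `A` about `n` i.i.d. samples from pmf `P`. -/
def iidProb {p : ℕ} (P : (Fin p → Bool) → ℝ) (n : ℕ)
    (A : Set (Fin n → Fin p → Bool)) : ℝ :=
  ∑ xs : Fin n → Fin p → Bool, if xs ∈ A then ∏ k, P (xs k) else 0

/-- Empirical agreement weight. -/
def Ahat {p n : ℕ} (xs : Fin n → Fin p → Bool) (i j : Fin p) : ℝ :=
  ((Finset.univ.filter (fun k : Fin n => xs k i = xs k j)).card : ℝ) / n

/-- Empirical agreement weight on unordered pairs. -/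
def AhatSym {p n : ℕ} (xs : Fin n → Fin p → Bool) : Sym2 (Fin p) → ℝ :=
  Sym2.lift ⟨fun i j => Ahat xs i j, fun i j => by
    have h : (Finset.univ.filter fun k : Fin n => xs k i = xs k j)
        = (Finset.univ.filter fun k : Fin n => xs k j = xs k i) :=
      Finset.filter_congr (fun k _ => ⟨Eq.symm, Eq.symm⟩)
    simp only [Ahat, h]⟩

/-- The path (Markov chain) tree on 3 nodes with edges {1,2},{2,3}. -/
def chainA : SimpleGraph (Fin 3) := SimpleGraph.fromEdgeSet {s(0,1), s(1,2)}

def chainB : SimpleGraph (Fin 3) := SimpleGraph.fromEdgeSet {s(0,2), s(1,2)}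

def chainC : SimpleGraph (Fin 3) := SimpleGraph.fromEdgeSet {s(0,1), s(0,2)}

def path4 : SimpleGraph (Fin 4) := SimpleGraph.fromEdgeSet {s(0,1), s(1,2), s(2,3)}

def Kexp (θ : ℝ) : ℝ := -Real.log (1 - θ * (1 - Real.sqrt (4 * θ * (1 - θ))))

def sigmaSq (θ : ℝ) : ℝ := θ * Real.sqrt (4 * θ * (1 - θ)) * Real.exp (Kexp θ)

def zTheta (θ : ℝ) : ℝ := Real.sqrt (θ / (1 - θ))

def ftilde (θ : ℝ) (n : ℕ) : ℝ :=
  Real.exp (-(n : ℝ) * Kexp θ) / Real.sqrt (2 * Real.pi * sigmaSq θ * n)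
    * (1 + (1 - 3 * sigmaSq θ) / (8 * sigmaSq θ * n))

def fn (θ : ℝ) (n : ℕ) : ℝ :=
  ftilde θ n / (1 - zTheta θ)
    * (1 - zTheta θ * (1 + zTheta θ) / (2 * (1 - zTheta θ) ^ 2 * sigmaSq θ * n))

/-- Hamming distance. -/
def hamming {p : ℕ} (x y : Fin p → Bool) : ℕ :=
  (Finset.univ.filter (fun i => x i ≠ y i)).card

/-- Noisy (BSC with crossover probability q) version of a distribution. -/
def noisy (q : ℝ) {p : ℕ} (P : (Fin p → Bool) → ℝ) (y : Fin p → Bool) : ℝ :=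
  ∑ x : Fin p → Bool, q ^ hamming x y * (1 - q) ^ (p - hamming x y) * P x

def beta1 (θ q : ℝ) : ℝ :=
  ((1 - q) ^ 3 + q ^ 3) * (θ * (1 - θ) / 2) + q * (1 - q) * ((1 - θ * (1 - θ)) / 2)

def beta2 (θ q : ℝ) : ℝ :=
  ((1 - q) ^ 3 + q ^ 3) * (θ ^ 2 / 2) + q * (1 - q) * ((1 - θ ^ 2) / 2)

def Kq (θ q : ℝ) : ℝ :=
  -Real.log (1 - 4 * ((beta1 θ q + beta2 θ q) / 2 - Real.sqrt (beta1 θ q * beta2 θ q)))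

def mu2 (θ q : ℝ) : ℝ := 4 * Real.sqrt (beta1 θ q * beta2 θ q) * Real.exp (Kq θ q)

def zq (θ q : ℝ) : ℝ := Real.sqrt (beta2 θ q / beta1 θ q)

def ftildeq (θ q : ℝ) (n : ℕ) : ℝ :=
  Real.exp (-(n : ℝ) * Kq θ q) / Real.sqrt (2 * Real.pi * mu2 θ q * n)
    * (1 + (1 - 3 * mu2 θ q) / (8 * mu2 θ q * n))

def fnq (θ q : ℝ) (n : ℕ) : ℝ :=
  ftildeq θ q n / (1 - zq θ q)
    * (1 - zq θ q * (1 + zq θ q) / (2 * (1 - zq θ q) ^ 2 * mu2 θ q * n))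

/-- Marginal of a pmf on `{0,1}^p` on a single coordinate. -/
def marg1 {p : ℕ} (Q : (Fin p → Bool) → ℝ) (i : Fin p) (a : Bool) : ℝ :=
  ∑ x ∈ Finset.univ.filter (fun x : Fin p → Bool => x i = a), Q x

/-- Marginal of a pmf on `{0,1}^p` on a pair of coordinates. -/
def marg2 {p : ℕ} (Q : (Fin p → Bool) → ℝ) (i j : Fin p) (a b : Bool) : ℝ :=
  ∑ x ∈ Finset.univ.filter (fun x : Fin p → Bool => x i = a ∧ x j = b), Q x

/-- Kullback-Leibler divergence between pmfs on a finite type. -/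
def klDiv {X : Type*} [Fintype X] (Q P : X → ℝ) : ℝ :=
  ∑ x : X, Q x * Real.log (Q x / P x)

/-- Empirical mutual information between coordinates `i` and `j`. -/
def mutInf {p : ℕ} (Q : (Fin p → Bool) → ℝ) (i j : Fin p) : ℝ :=
  ∑ a : Bool, ∑ b : Bool,
    marg2 Q i j a b * Real.log (marg2 Q i j a b / (marg1 Q i a * marg1 Q j b))

end

/-!
By the exchange property of spanning trees, `T` fails to be the unique maximiser exactly when some
single exchange, of an edge `ij` of `T` on the path from `u` to `v` for the non-edge `uv`, does not
decrease the weight, i.e. when `∑ k, Z (x_k) ≥ 0` for the agreement gap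
`Z = 1[x_u = x_v] - 1[x_i = x_j] ∈ {-1, 0, 1}`.

Flipping all spins on one side of an edge of `T` changes the likelihood only through that edge.
Flipping across `ij` turns `Z` into `-Z`, whence `ℙ(Z = 1) : ℙ(Z = -1) = θ : 1 - θ`; flipping across
another edge of the path from `u` to `v` swaps `Z = 0` and `Z ≠ 0`, whence `ℙ(Z ≠ 0) ≥ θ`, with
equality when `ij` and `jv` are adjacent edges and `u = i`. The minimum over `s` of `𝔼[s ^ Z]` is
`1 - ℙ(Z ≠ 0) * (1 - √(4θ(1-θ)))`, so Chernoff's bound and a union bound over the exchanges give the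
upper bound on `ℙ(B_n)`. For the lower bound take adjacent edges: under the tilted law the walk
`∑ k, Z (x_k)` is symmetric, and by Cauchy–Schwarz it is at `0` with probability at least of order
`1 / n`, which does not affect the exponent.
-/

namespace IsingTree

section Exchange
open SimpleGraph

variable {V : Type*} {G T T' : SimpleGraph V} {i j m u v : V}

lemma reachable_deleteEdges_of_adj (huv : G.Adj u v) (hne : s(u, v) ≠ s(i, j)) :
    (G.deleteEdges {s(i, j)}).Reachable u v :=
  Adj.reachable (deleteEdges_adj.2 ⟨huv, hne⟩)

lemma reachable_deleteEdges_left_or_right (hG : G.Connected) (i j w : V) :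
    (G.deleteEdges {s(i, j)}).Reachable i w ∨ (G.deleteEdges {s(i, j)}).Reachable j w := by
  set S : Set V :=
    {w | (G.deleteEdges {s(i, j)}).Reachable i w ∨ (G.deleteEdges {s(i, j)}).Reachable j w}
  by_contra hw
  obtain ⟨q⟩ := hG.preconnected i w
  obtain ⟨d, -, hfst, hsnd⟩ := q.exists_boundary_dart S (Or.inl (Reachable.refl i)) hw
  by_cases hd : s(d.fst, d.snd) = s(i, j)
  · rcases Sym2.eq_iff.1 hd with ⟨-, h⟩ | ⟨-, h⟩
    · exact hsnd (Or.inr (h ▸ Reachable.refl _))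
    · exact hsnd (Or.inl (h ▸ Reachable.refl _))
  · have hstep := reachable_deleteEdges_of_adj d.adj hd
    exact hsnd (hfst.imp (·.trans hstep) (·.trans hstep))

lemma not_reachable_deleteEdges_of_mem_edges (hG : G.IsAcyclic) {q : G.Walk u v}
    (hq : q.IsPath) (he : s(i, j) ∈ q.edges) : ¬ (G.deleteEdges {s(i, j)}).Reachable u v := by
  rw [reachable_deleteEdges_iff_exists_walk]
  rintro ⟨r, hr⟩
  have hqr : q = r.bypass := congrArg Subtype.val ((hG.subsingleton_path u v).elim ⟨q, hq⟩ r.toPath)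
  exact hr (r.edges_bypass_subset_edges (hqr ▸ he))

lemma not_reachable_deleteEdges_of_adj (hG : G.IsAcyclic) (hij : G.Adj i j) :
    ¬ (G.deleteEdges {s(i, j)}).Reachable i j :=
  isBridge_iff.1 (isAcyclic_iff_forall_adj_isBridge.1 hG hij)

/-- `s(i, j)` is an edge of `T`, `s(u, v)` is not, and in a tree `T` the edge `s(i, j)` lies on the
path from `u` to `v`, so that replacing `s(i, j)` by `s(u, v)` yields another spanning tree. -/
structure IsExchange (T : SimpleGraph V) (i j u v : V) : Prop where
  adj : T.Adj i j
  not_adj : ¬ T.Adj u v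
  not_reachable : ¬ (T.deleteEdges {s(i, j)}).Reachable u v

/-- The graph obtained from `T` by replacing the edge `s(i, j)` by `s(u, v)`. -/
def exchange (T : SimpleGraph V) (i j u v : V) : SimpleGraph V :=
  T.deleteEdges {s(i, j)} ⊔ edge u v

namespace IsExchange

lemma ne (h : IsExchange T i j u v) : u ≠ v := by
  rintro rfl
  exact h.not_reachable (Reachable.refl u)

lemma isTree_exchange (hT : T.IsTree) (h : IsExchange T i j u v) :
    (exchange T i j u v).IsTree := by
  have hle : T.deleteEdges {s(i, j)} ≤ exchange T i j u v := le_sup_left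
  have huv : (exchange T i j u v).Reachable u v :=
    Adj.reachable (Or.inr ((edge_adj ..).2 ⟨Or.inl ⟨rfl, rfl⟩, h.ne⟩))
  have side := reachable_deleteEdges_left_or_right hT.connected i j
  have hij : (exchange T i j u v).Reachable i j := by
    rcases side u, side v with ⟨hu | hu, hv | hv⟩
    · exact absurd (hu.symm.trans hv) h.not_reachable
    · exact ((hu.mono hle).trans huv).trans (hv.mono hle).symm
    · exact ((hv.mono hle).trans huv.symm).trans (hu.mono hle).symm
    · exact absurd (hu.symm.trans hv) h.not_reachable
  have hi (x : V) : (exchange T i j u v).Reachable i x :=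
    (side x).elim (·.mono hle) fun hx => hij.trans (hx.mono hle)
  have : Nonempty V := ⟨i⟩
  exact ⟨⟨fun x y => (hi x).symm.trans (hi y)⟩,
    (hT.isAcyclic.anti (deleteEdges_le _)).sup_edge_of_not_reachable h.not_reachable⟩

lemma edgeFinset_exchange [Fintype V] (h : IsExchange T i j u v) :
    (exchange T i j u v).edgeFinset = insert s(u, v) (T.edgeFinset.erase s(i, j)) := by
  have hedgeSet : (exchange T i j u v).edgeSet = T.edgeSet \ {s(i, j)} ∪ {s(u, v)} := by
    rw [exchange, edgeSet_sup, edgeSet_deleteEdges, edgeSet_edge_of_ne h.ne]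
  ext e
  simp only [mem_edgeFinset, hedgeSet, Finset.mem_insert, Finset.mem_erase, Set.mem_union,
    Set.mem_sdiff, Set.mem_singleton_iff]
  tauto

lemma sum_edgeFinset_exchange [Fintype V] {M : Type*} [AddCommMonoid M] (w : Sym2 V → M)
    (h : IsExchange T i j u v) :
    ∑ e ∈ (exchange T i j u v).edgeFinset, w e + w s(i, j)
      = ∑ e ∈ T.edgeFinset, w e + w s(u, v) := by
  have hnew : s(u, v) ∉ T.edgeFinset.erase s(i, j) := fun hmem =>
    h.not_adj (mem_edgeFinset.1 (Finset.mem_of_mem_erase hmem))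
  rw [h.edgeFinset_exchange, Finset.sum_insert hnew, add_assoc,
    Finset.sum_erase_add _ _ (mem_edgeFinset.2 h.adj), add_comm]

lemma exchange_ne (h : IsExchange T i j u v) : exchange T i j u v ≠ T := by
  intro heq
  refine h.not_adj (heq ▸ ?_)
  exact Or.inr ((edge_adj ..).2 ⟨Or.inl ⟨rfl, rfl⟩, h.ne⟩)

lemma exists_second_edge (hT : T.IsTree) (h : IsExchange T i j u v) :
    ∃ a b, T.Adj a b ∧ s(a, b) ≠ s(i, j) ∧ ¬ (T.deleteEdges {s(a, b)}).Reachable u v := by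
  obtain ⟨q, hq, -⟩ := hT.existsUnique_path u v
  have hlength : 1 < q.length := by
    by_contra! hle
    interval_cases hq' : q.length
    · exact h.ne (Walk.eq_of_length_eq_zero hq')
    · exact h.not_adj (Walk.adj_of_length_eq_one hq')
  have hcard : 1 < q.edges.toFinset.card := by
    rwa [List.toFinset_card_of_nodup hq.isTrail.edges_nodup, Walk.length_edges]
  obtain ⟨⟨a, b⟩, hab, hne⟩ := Finset.exists_mem_ne hcard s(i, j)
  have hab : s(a, b) ∈ q.edges := List.mem_toFinset.1 hab
  exact ⟨a, b, q.adj_of_mem_edges hab, hne,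
    not_reachable_deleteEdges_of_mem_edges hT.isAcyclic hq hab⟩

end IsExchange

/-- Delete from `T` an edge missing from the other tree: the path joining its ends in the other tree
crosses the cut. -/
lemma exists_isExchange_of_ne (hT : T.IsTree) (hT' : T'.IsTree) (hne : T' ≠ T) :
    ∃ i j u v, IsExchange T i j u v ∧ IsExchange T' u v i j := by
  obtain ⟨i, j, hij, hij'⟩ : ∃ i j, T.Adj i j ∧ ¬ T'.Adj i j := by
    by_contra! hle
    have hmin := (isTree_iff_minimal_connected.1 hT').le_of_le hT.connected fun a b => hle a b
    exact hne (le_antisymm hmin fun a b => hle a b)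
  obtain ⟨q, hq, -⟩ := hT'.existsUnique_path i j
  obtain ⟨d, hd, hfst, hsnd⟩ := q.exists_boundary_dart
    {x | (T.deleteEdges {s(i, j)}).Reachable i x} (Reachable.refl i)
    (not_reachable_deleteEdges_of_adj hT.isAcyclic hij)
  have hsep : ¬ (T.deleteEdges {s(i, j)}).Reachable d.fst d.snd := fun h => hsnd (hfst.trans h)
  have hdij : s(d.fst, d.snd) ≠ s(i, j) := fun h => hij' (adj_congr_of_sym2 T' h |>.1 d.adj)
  exact ⟨i, j, d.fst, d.snd,
    ⟨hij, fun h => hsep (reachable_deleteEdges_of_adj h hdij), hsep⟩,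
    ⟨d.adj, hij', not_reachable_deleteEdges_of_mem_edges hT'.isAcyclic hq
      (List.mem_map_of_mem hd)⟩⟩

lemma isExchange_of_adj_of_adj (hT : T.IsAcyclic) (hu : T.Adj m u) (hv : T.Adj m v)
    (huv : u ≠ v) : IsExchange T u m u v := by
  have hmv : (T.deleteEdges {s(u, m)}).Reachable m v :=
    reachable_deleteEdges_of_adj hv (by simp [hu.ne, huv.symm])
  have hsep : ¬ (T.deleteEdges {s(u, m)}).Reachable u v := fun h =>
    not_reachable_deleteEdges_of_adj hT hu.symm (h.trans hmv.symm)
  exact ⟨hu.symm, fun h => hsep (reachable_deleteEdges_of_adj h (by simp [hu.ne', hv.ne'])), hsep⟩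

lemma exists_adj_adj_ne [Fintype V] (hG : G.Connected) (hV : 3 ≤ Fintype.card V) :
    ∃ m u v, G.Adj m u ∧ G.Adj m v ∧ u ≠ v := by
  by_contra! hunique
  have hdeg (m : V) : G.degree m ≤ 1 := by
    rw [← card_neighborFinset_eq_degree, Finset.card_le_one]
    simpa only [mem_neighborFinset] using fun a ha b hb => hunique m a b ha hb
  have hsum : ∑ m, G.degree m ≤ Fintype.card V := by
    simpa using Finset.sum_le_sum fun m (_ : m ∈ Finset.univ) => hdeg m
  have hedges := hG.card_vert_le_card_edgeSet_add_one
  rw [Nat.card_eq_fintype_card, Nat.card_eq_fintype_card, ← edgeFinset_card] at hedges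
  have := G.sum_degrees_eq_twice_card_edges
  omega

section Weights

variable [Fintype V] {M : Type*} [AddCommGroup M] [LinearOrder M] [IsOrderedAddMonoid M]
  (w : Sym2 V → M)

lemma eq_of_forall_isTree_sum_le (hT : T.IsTree)
    (hw : ∀ i j u v, IsExchange T i j u v → w s(u, v) < w s(i, j)) (hT' : T'.IsTree)
    (hmax : ∀ S : SimpleGraph V, S.IsTree →
      ∑ e ∈ S.edgeFinset, w e ≤ ∑ e ∈ T'.edgeFinset, w e) : T' = T := by
  by_contra hne
  obtain ⟨i, j, u, v, hexch, hexch'⟩ := exists_isExchange_of_ne hT hT' hne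
  have hle := hmax _ (hexch'.isTree_exchange hT')
  have hlt := add_lt_add_of_le_of_lt hle (hw i j u v hexch)
  exact hlt.ne (hexch'.sum_edgeFinset_exchange w)

lemma exists_isTree_sum_le_iff_exists_isExchange (hT : T.IsTree) :
    (∃ T' : SimpleGraph V, T'.IsTree ∧ T'.edgeSet ≠ T.edgeSet ∧
        ∑ e ∈ T.edgeFinset, w e ≤ ∑ e ∈ T'.edgeFinset, w e) ↔
      ∃ i j u v, IsExchange T i j u v ∧ w s(i, j) ≤ w s(u, v) := by
  constructor
  · rintro ⟨T', hT', hne, hle⟩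
    by_contra! hw
    obtain ⟨S, hS, hSmax⟩ := Finset.exists_max_image
      (Finset.univ.filter fun S : SimpleGraph V => S.IsTree)
      (fun S => ∑ e ∈ S.edgeFinset, w e) ⟨T, by simpa using hT⟩
    simp only [Finset.mem_filter_univ] at hS hSmax
    obtain rfl := eq_of_forall_isTree_sum_le w hT hw hS hSmax
    obtain rfl := eq_of_forall_isTree_sum_le w hT hw hT' fun R hR => (hSmax R hR).trans hle
    exact hne rfl
  · rintro ⟨i, j, u, v, hexch, hle⟩
    refine ⟨exchange T i j u v, hexch.isTree_exchange hT,
      fun heq => hexch.exchange_ne (edgeSet_injective heq), ?_⟩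
    refine le_of_add_le_add_right (a := w s(i, j)) ?_
    rw [hexch.sum_edgeFinset_exchange w]
    gcongr

end Weights

end Exchange

section Palindromic
open Polynomial

lemma reflect_pow {R : Type*} [CommSemiring R] {F : R[X]} {N : ℕ} (hF : F.natDegree ≤ N)
    (m : ℕ) : reflect (N * m) (F ^ m) = reflect N F ^ m := by
  induction m with
  | zero => simp
  | succ m ih =>
    have hdegree : (F ^ m).natDegree ≤ N * m := by
      simpa only [mul_comm m] using natDegree_pow_le_of_le m hF
    rw [pow_succ, mul_add_one, reflect_mul _ _ hdegree hF, ih, pow_succ]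

variable {R : Type*} [CommRing R] [LinearOrder R] [IsStrictOrderedRing R] {F G : R[X]}

lemma coeff_pow_nonneg (hF : ∀ k, 0 ≤ F.coeff k) (n k : ℕ) : 0 ≤ (F ^ n).coeff k := by
  induction n generalizing k with
  | zero => rw [pow_zero, coeff_one]; split_ifs <;> simp
  | succ n ih =>
    rw [pow_succ, coeff_mul]
    exact Finset.sum_nonneg fun x _ => mul_nonneg (ih _) (hF _)

lemma coeff_mul_coeff_le_coeff_mul (hF : ∀ k, 0 ≤ F.coeff k) (hG : ∀ k, 0 ≤ G.coeff k)
    (k l : ℕ) : F.coeff k * G.coeff l ≤ (F * G).coeff (k + l) := by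
  rw [coeff_mul]
  exact Finset.single_le_sum (f := fun x : ℕ × ℕ => F.coeff x.1 * G.coeff x.2)
    (fun x _ => mul_nonneg (hF _) (hG _)) (a := (k, l)) (by simp)

/-- The middle coefficient of `G ^ 2` is the sum of the squares of the coefficients of `G`. -/
lemma sq_eval_one_le_mul_coeff_sq {N : ℕ} (hdegree : G.natDegree ≤ N) (hG : reflect N G = G) :
    G.eval 1 ^ 2 ≤ (N + 1) * (G ^ 2).coeff N := by
  have hpalindrome (k : ℕ) (hk : k < N + 1) : G.coeff (N - k) = G.coeff k := by
    conv_rhs => rw [← hG, coeff_reflect, revAt_le (Nat.lt_succ_iff.1 hk)]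
  have hmiddle : (G ^ 2).coeff N = ∑ k ∈ Finset.range (N + 1), G.coeff k ^ 2 := by
    rw [sq, coeff_mul, Finset.Nat.sum_antidiagonal_eq_sum_range_succ_mk]
    refine Finset.sum_congr rfl fun k hk => ?_
    rw [hpalindrome k (Finset.mem_range.1 hk), sq]
  have heval : G.eval 1 = ∑ k ∈ Finset.range (N + 1), G.coeff k := by
    simp [eval_eq_sum_range' (Nat.lt_succ_of_le hdegree)]
  rw [heval, hmiddle]
  simpa using sq_sum_le_card_mul_sum_sq (s := Finset.range (N + 1)) (f := G.coeff)

lemma eval_one_pow_le_mul_coeff_pow {N : ℕ} (hdegree : F.natDegree ≤ N) (hF : reflect N F = F)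
    (m : ℕ) : F.eval 1 ^ (2 * m) ≤ ((N * m : ℕ) + 1) * (F ^ (2 * m)).coeff (N * m) := by
  have hdegree_pow : (F ^ m).natDegree ≤ N * m := by
    simpa only [mul_comm m] using natDegree_pow_le_of_le m hdegree
  have h := sq_eval_one_le_mul_coeff_sq hdegree_pow (by rw [reflect_pow hdegree, hF])
  rwa [eval_pow, ← pow_mul, ← pow_mul, mul_comm m] at h

lemma coeff_one_mul_eval_one_pow_le (hdegree : F.natDegree ≤ 2) (hF : reflect 2 F = F)
    (hnonneg : ∀ k, 0 ≤ F.coeff k) (n : ℕ) :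
    F.coeff 1 * F.eval 1 ^ n ≤ (n + 1) * F.eval 1 * (F ^ n).coeff n := by
  have hcoeff : F.coeff 1 ≤ F.eval 1 := by
    rw [eval_eq_sum_range' (Nat.lt_succ_of_le hdegree)]
    simpa using Finset.single_le_sum (fun k _ => hnonneg k)
      (Finset.mem_range.2 (by norm_num : 1 < 3))
  have heval : 0 ≤ F.eval 1 := (hnonneg 1).trans hcoeff
  obtain ⟨m, rfl | rfl⟩ := Nat.even_or_odd' n
  · calc F.coeff 1 * F.eval 1 ^ (2 * m)
        ≤ F.eval 1 * (((2 * m : ℕ) + 1) * (F ^ (2 * m)).coeff (2 * m)) := by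
          gcongr
          exact eval_one_pow_le_mul_coeff_pow hdegree hF m
      _ = _ := by ring
  · have hstep : (F ^ (2 * m)).coeff (2 * m) * F.coeff 1 ≤ (F ^ (2 * m + 1)).coeff (2 * m + 1) :=
      pow_succ F (2 * m) ▸ coeff_mul_coeff_le_coeff_mul (coeff_pow_nonneg hnonneg _) hnonneg _ _
    calc F.coeff 1 * F.eval 1 ^ (2 * m + 1)
        = F.coeff 1 * F.eval 1 * F.eval 1 ^ (2 * m) := by ring
      _ ≤ F.coeff 1 * F.eval 1 * (((2 * m : ℕ) + 1) * (F ^ (2 * m)).coeff (2 * m)) := by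
          have := mul_nonneg (hnonneg 1) heval
          gcongr
          exact eval_one_pow_le_mul_coeff_pow hdegree hF m
      _ = ((2 * m : ℕ) + 1) * F.eval 1 * ((F ^ (2 * m)).coeff (2 * m) * F.coeff 1) := by ring
      _ ≤ ((2 * m + 1 : ℕ) + 1) * F.eval 1 * (F ^ (2 * m + 1)).coeff (2 * m + 1) := by
          gcongr
          · exact mul_nonneg (coeff_pow_nonneg hnonneg _ _) (hnonneg 1)
          · omega

end Palindromic

section IIDSums
open Polynomial

lemma prod_mul_zpow_eq {ι : Type*} (S : Finset ι) (f : ι → ℝ) (z : ι → ℤ) {s : ℝ} (hs : s ≠ 0) :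
    ∏ k ∈ S, f k * s ^ z k = (∏ k ∈ S, f k) * s ^ ∑ k ∈ S, z k := by
  induction S using Finset.induction_on with
  | empty => simp
  | insert k S hk ih =>
    rw [Finset.prod_insert hk, ih, Finset.prod_insert hk, Finset.sum_insert hk, zpow_add₀ hs]
    ring

variable {α : Type*} [Fintype α]

lemma coeff_sum_monomial_pow {R : Type*} [CommSemiring R] (z : α → ℕ) (Q : α → R) (n k : ℕ) :
    ((∑ x, monomial (z x) (Q x)) ^ n).coeff k
      = ∑ xs : Fin n → α with ∑ l, z (xs l) = k, ∏ l, Q (xs l) := by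
  rw [Fintype.sum_pow, finsetSum_coeff, Finset.sum_filter]
  refine Finset.sum_congr rfl fun xs _ => ?_
  have hprod : ∏ l, monomial (z (xs l)) (Q (xs l))
      = monomial (∑ l, z (xs l)) (∏ l, Q (xs l)) := by
    simp only [← C_mul_X_pow_eq_monomial, Finset.prod_mul_distrib, Finset.prod_pow_eq_pow_sum,
      map_prod]
  rw [hprod, coeff_monomial]

/-- The symmetry of the steps makes `∑ x, Q x * X ^ (Z x + 1)` palindromic of degree `2`. -/
lemma sum_zero_mul_sum_pow_le {Q : α → ℝ} (hQ : ∀ x, 0 ≤ Q x) {Z : α → ℤ}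
    (hZ : ∀ x, Z x = -1 ∨ Z x = 0 ∨ Z x = 1)
    (hsymm : ∑ x with Z x = 1, Q x = ∑ x with Z x = -1, Q x) (n : ℕ) :
    (∑ x with Z x = 0, Q x) * (∑ x, Q x) ^ n ≤
      (n + 1) * (∑ x, Q x) * ∑ xs : Fin n → α with ∑ k, Z (xs k) = 0, ∏ k, Q (xs k) := by
  set z : α → ℕ := fun x => (Z x + 1).toNat
  have hzZ (x : α) : (z x : ℤ) = Z x + 1 := by grind
  set F : ℝ[X] := ∑ x, monomial (z x) (Q x) with hF
  have hcoeff (k : ℕ) : F.coeff k = ∑ x with Z x = (k : ℤ) - 1, Q x := by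
    have hiff (x : α) : z x = k ↔ Z x = (k : ℤ) - 1 := by grind
    simp only [hF, finsetSum_coeff, coeff_monomial, Finset.sum_filter, hiff]
  have hcoeff_pow :
      (F ^ n).coeff n = ∑ xs : Fin n → α with ∑ k, Z (xs k) = 0, ∏ k, Q (xs k) := by
    have hiff (xs : Fin n → α) : ∑ k, z (xs k) = n ↔ ∑ k, Z (xs k) = 0 := by
      zify
      simp only [hzZ, Finset.sum_add_distrib]
      simp
    simp only [hF, coeff_sum_monomial_pow, hiff]
  have heval : F.eval 1 = ∑ x, Q x := by simp [hF, eval_finsetSum]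
  have hdegree : F.natDegree ≤ 2 := natDegree_sum_le_of_forall_le _ _ fun x _ =>
    (natDegree_monomial_le _).trans (by grind)
  have hreflect : reflect 2 F = F := by
    ext k
    rw [coeff_reflect]
    rcases le_or_gt k 2 with hk | hk
    · rw [revAt_le hk]
      interval_cases k <;> simp [hcoeff, hsymm]
    · rw [revAt_eq_self_of_lt hk]
  have hnonneg (k : ℕ) : 0 ≤ F.coeff k := hcoeff k ▸ Finset.sum_nonneg fun x _ => hQ x
  simpa [hcoeff_pow, heval, hcoeff] using coeff_one_mul_eval_one_pow_le hdegree hreflect hnonneg n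

lemma sum_nonneg_le_mgf_pow {P : α → ℝ} (hP : ∀ x, 0 ≤ P x) (Z : α → ℤ) {s : ℝ} (hs : 1 ≤ s)
    (n : ℕ) :
    ∑ xs : Fin n → α with 0 ≤ ∑ k, Z (xs k), ∏ k, P (xs k) ≤ (∑ x, P x * s ^ Z x) ^ n := by
  have hs0 : 0 < s := zero_lt_one.trans_le hs
  have hprod (xs : Fin n → α) : 0 ≤ ∏ k, P (xs k) := Finset.prod_nonneg fun k _ => hP _
  simp only [Fintype.sum_pow, prod_mul_zpow_eq _ _ _ hs0.ne']
  calc ∑ xs : Fin n → α with 0 ≤ ∑ k, Z (xs k), ∏ k, P (xs k)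
      ≤ ∑ xs : Fin n → α with 0 ≤ ∑ k, Z (xs k), (∏ k, P (xs k)) * s ^ ∑ k, Z (xs k) :=
        Finset.sum_le_sum fun xs hxs => le_mul_of_one_le_right (hprod xs)
          (one_le_zpow₀ hs (Finset.mem_filter_univ xs |>.1 hxs))
    _ ≤ ∑ xs : Fin n → α, (∏ k, P (xs k)) * s ^ ∑ k, Z (xs k) :=
        Finset.sum_le_sum_of_subset_of_nonneg (Finset.filter_subset _ _) fun xs _ _ =>
          mul_nonneg (hprod xs) (by positivity)

lemma sum_mul_zpow_eq {P : α → ℝ} {Z : α → ℤ} (hZ : ∀ x, Z x = -1 ∨ Z x = 0 ∨ Z x = 1) (s : ℝ) :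
    ∑ x, P x * s ^ Z x
      = ∑ x with Z x = 0, P x + s * ∑ x with Z x = 1, P x + s⁻¹ * ∑ x with Z x = -1, P x := by
  simp only [Finset.sum_filter, Finset.mul_sum, ← Finset.sum_add_distrib]
  refine Finset.sum_congr rfl fun x _ => ?_
  rcases hZ x with h | h | h <;> simp [h, mul_comm]

lemma sum_filter_mul_zpow (P : α → ℝ) (Z : α → ℤ) (s : ℝ) (c : ℤ) :
    ∑ x with Z x = c, P x * s ^ Z x = s ^ c * ∑ x with Z x = c, P x := by
  rw [Finset.mul_sum]
  refine Finset.sum_congr rfl fun x hx => ?_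
  rw [Finset.mem_filter_univ x |>.1 hx, mul_comm]

/-- Tilting by `s ^ Z` symmetrizes the steps and does not change the mass of the paths with
`∑ k, Z (xs k) = 0`. -/
lemma sum_zero_mul_mgf_pow_le {P : α → ℝ} (hP : ∀ x, 0 ≤ P x) {Z : α → ℤ}
    (hZ : ∀ x, Z x = -1 ∨ Z x = 0 ∨ Z x = 1) {s : ℝ} (hs : 0 < s)
    (hbalance : s * ∑ x with Z x = 1, P x = s⁻¹ * ∑ x with Z x = -1, P x) (n : ℕ) :
    (∑ x with Z x = 0, P x) * (∑ x, P x * s ^ Z x) ^ n ≤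
      (n + 1) * (∑ x, P x * s ^ Z x) *
        ∑ xs : Fin n → α with ∑ k, Z (xs k) = 0, ∏ k, P (xs k) := by
  have htilt : ∑ xs : Fin n → α with ∑ k, Z (xs k) = 0, ∏ k, P (xs k) * s ^ Z (xs k)
      = ∑ xs : Fin n → α with ∑ k, Z (xs k) = 0, ∏ k, P (xs k) := by
    refine Finset.sum_congr rfl fun xs hxs => ?_
    rw [prod_mul_zpow_eq _ _ _ hs.ne', Finset.mem_filter_univ xs |>.1 hxs, zpow_zero, mul_one]
  have h := sum_zero_mul_sum_pow_le (Q := fun x => P x * s ^ Z x)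
    (fun x => mul_nonneg (hP x) (by positivity)) hZ
    (by simpa only [sum_filter_mul_zpow, zpow_one, zpow_neg_one] using hbalance) n
  rwa [htilt, sum_filter_mul_zpow, zpow_zero, one_mul] at h

end IIDSums

section ExponentialRate
open Filter Topology

lemma tendsto_log_natCast_add_one_div_natCast :
    Tendsto (fun n : ℕ => Real.log (n + 1) / n) atTop (𝓝 0) := by
  have h := (Real.tendsto_pow_log_div_mul_add_atTop 1 (-1) 1 one_ne_zero).comp
    (tendsto_atTop_add_const_right atTop (1 : ℝ) tendsto_natCast_atTop_atTop)
  simpa [Function.comp_def] using h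

lemma tendsto_neg_inv_mul_log_of_le_of_le {f : ℕ → ℝ} {ρ c C : ℝ} (hρ : 0 < ρ) (hc : 0 < c)
    (hC : 0 < C) (hlower : ∀ n : ℕ, 0 < n → c * ρ ^ n ≤ (n + 1) * f n)
    (hupper : ∀ n : ℕ, 0 < n → f n ≤ C * ρ ^ n) :
    Tendsto (fun n : ℕ => -(1 / (n : ℝ)) * Real.log (f n)) atTop (𝓝 (-Real.log ρ)) := by
  have hlow : Tendsto (fun n : ℕ => -(Real.log C / n) - Real.log ρ) atTop (𝓝 (-Real.log ρ)) := by
    simpa using (tendsto_const_div_atTop_nhds_zero_nat (Real.log C)).neg.sub_const (Real.log ρ)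
  have hhigh : Tendsto (fun n : ℕ => Real.log (n + 1) / n - Real.log c / n - Real.log ρ) atTop
      (𝓝 (-Real.log ρ)) := by
    simpa using (tendsto_log_natCast_add_one_div_natCast.sub
      (tendsto_const_div_atTop_nhds_zero_nat (Real.log c))).sub_const (Real.log ρ)
  have hpos (n : ℕ) (hn : 0 < n) : 0 < f n :=
    pos_of_mul_pos_right ((by positivity : 0 < c * ρ ^ n).trans_le (hlower n hn)) (by positivity)
  refine tendsto_of_tendsto_of_tendsto_of_le_of_le' hlow hhigh ?_ ?_ <;>
    filter_upwards [eventually_gt_atTop 0] with n hn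
  · have hlog := Real.log_le_log (hpos n hn) (hupper n hn)
    rw [Real.log_mul hC.ne' (by positivity), Real.log_pow] at hlog
    field_simp
    linarith
  · have hlog := Real.log_le_log (by positivity) (hlower n hn)
    rw [Real.log_mul hc.ne' (by positivity), Real.log_mul (by positivity) (hpos n hn).ne',
      Real.log_pow] at hlog
    field_simp
    linarith

end ExponentialRate

section Flip
open SimpleGraph

variable {V : Type*} {T : SimpleGraph V} {i j u v : V}

/-- Flips the spins on the component of `j` in `T` minus the edge `s(i, j)`. -/
noncomputable def flip (T : SimpleGraph V) (i j : V) (x : V → Bool) : V → Bool :=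
  fun w => if (T.deleteEdges {s(i, j)}).Reachable j w then !x w else x w

lemma flip_involutive (T : SimpleGraph V) (i j : V) : Function.Involutive (flip T i j) := by
  intro x
  funext w
  by_cases h : (T.deleteEdges {s(i, j)}).Reachable j w <;> simp [flip, h]

lemma flip_eq_iff_of_reachable (x : V → Bool) (h : (T.deleteEdges {s(i, j)}).Reachable u v) :
    flip T i j x u = flip T i j x v ↔ x u = x v := by
  have hiff : (T.deleteEdges {s(i, j)}).Reachable j u ↔ (T.deleteEdges {s(i, j)}).Reachable j v :=
    ⟨(·.trans h), (·.trans h.symm)⟩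
  simp only [flip, hiff]
  split_ifs <;> simp

lemma flip_eq_iff_of_not_reachable (hT : T.Connected) (x : V → Bool)
    (h : ¬ (T.deleteEdges {s(i, j)}).Reachable u v) :
    flip T i j x u = flip T i j x v ↔ x u ≠ x v := by
  have hu := reachable_deleteEdges_left_or_right hT i j u
  have hv := reachable_deleteEdges_left_or_right hT i j v
  simp only [flip]
  split_ifs with hju hjv hjv
  · exact absurd (hju.symm.trans hjv) h
  · simp [Bool.eq_not]
  · simp [Bool.eq_not]
  · exact absurd ((hu.resolve_right hju).symm.trans (hv.resolve_right hjv)) h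

/-- The increment of `n * (Â s(u, v) - Â s(i, j))` contributed by the sample `x`. -/
def agreementGap (i j u v : V) (x : V → Bool) : ℤ :=
  (if x u = x v then 1 else 0) - (if x i = x j then 1 else 0)

lemma agreementGap_cases (i j u v : V) (x : V → Bool) :
    agreementGap i j u v x = -1 ∨ agreementGap i j u v x = 0 ∨ agreementGap i j u v x = 1 := by
  unfold agreementGap
  split_ifs <;> simp

lemma agreementGap_flip (hT : T.IsTree) (h : IsExchange T i j u v) (x : V → Bool) :
    agreementGap i j u v (flip T i j x) = -agreementGap i j u v x := by
  simp only [agreementGap, flip_eq_iff_of_not_reachable hT.connected x h.not_reachable,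
    flip_eq_iff_of_not_reachable hT.connected x
      (not_reachable_deleteEdges_of_adj hT.isAcyclic h.adj)]
  split_ifs <;> simp_all

lemma agreementGap_flip_eq_zero_iff {a b : V} (hT : T.Connected) (hij : T.Adj i j)
    (hne : s(i, j) ≠ s(a, b)) (hsep : ¬ (T.deleteEdges {s(a, b)}).Reachable u v) (x : V → Bool) :
    agreementGap i j u v (flip T a b x) = 0 ↔ agreementGap i j u v x ≠ 0 := by
  simp only [agreementGap, flip_eq_iff_of_not_reachable hT x hsep,
    flip_eq_iff_of_reachable x (reachable_deleteEdges_of_adj hij hne)]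
  split_ifs <;> simp_all

end Flip

section IsingModel
open SimpleGraph

variable {p : ℕ} {θ : ℝ} {T : SimpleGraph (Fin p)} {i j m u v : Fin p}

lemma pairWeight_mk (θ : ℝ) (x : Fin p → Bool) (i j : Fin p) :
    pairWeight θ x s(i, j) = if x i = x j then 1 - θ else θ := rfl

lemma pairWeight_flip_of_ne (θ : ℝ) (x : Fin p → Bool) {e : Sym2 (Fin p)}
    (he : e ∈ T.edgeFinset) (hne : e ≠ s(i, j)) :
    pairWeight θ (flip T i j x) e = pairWeight θ x e := by
  induction e with
  | _ u v =>
    have huv := reachable_deleteEdges_of_adj (mem_edgeFinset.1 he) hne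
    simp only [pairWeight_mk, flip_eq_iff_of_reachable x huv]

lemma pairWeight_flip_self (hT : T.IsTree) (θ : ℝ) (hij : T.Adj i j) (x : Fin p → Bool) :
    pairWeight θ (flip T i j x) s(i, j) = 1 - pairWeight θ x s(i, j) := by
  simp only [pairWeight_mk, flip_eq_iff_of_not_reachable hT.connected x
    (not_reachable_deleteEdges_of_adj hT.isAcyclic hij)]
  split_ifs <;> simp_all

lemma sum_comp_flip (T : SimpleGraph (Fin p)) (i j : Fin p) (f : (Fin p → Bool) → ℝ) :
    ∑ x, f (flip T i j x) = ∑ x, f x :=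
  Equiv.sum_comp (flip_involutive T i j).toPerm f

lemma two_pow_card_mul_sum_prod_pairWeight (hT : T.IsTree) (θ : ℝ) {S : Finset (Sym2 (Fin p))}
    (hS : S ⊆ T.edgeFinset) :
    2 ^ S.card * ∑ x : Fin p → Bool, ∏ e ∈ S, pairWeight θ x e = 2 ^ p := by
  induction S using Finset.induction_on with
  | empty => simp
  | insert e S he ih =>
    obtain ⟨heT, hST⟩ := Finset.insert_subset_iff.1 hS
    induction e with
    | _ i j =>
    have hij : T.Adj i j := mem_edgeFinset.1 heT
    have hS_flip (x : Fin p → Bool) :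
        ∏ e ∈ S, pairWeight θ (flip T i j x) e = ∏ e ∈ S, pairWeight θ x e :=
      Finset.prod_congr rfl fun e heS =>
        pairWeight_flip_of_ne θ x (hST heS) (ne_of_mem_of_not_mem heS he)
    have hdouble : 2 * ∑ x : Fin p → Bool, ∏ e ∈ insert s(i, j) S, pairWeight θ x e
        = ∑ x : Fin p → Bool, ∏ e ∈ S, pairWeight θ x e := by
      rw [two_mul]
      nth_rewrite 1 [← sum_comp_flip T i j]
      rw [← Finset.sum_add_distrib]
      refine Finset.sum_congr rfl fun x _ => ?_
      rw [Finset.prod_insert he, Finset.prod_insert he, pairWeight_flip_self hT θ hij, hS_flip]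
      ring
    rw [Finset.card_insert_of_notMem he, pow_succ, mul_assoc, hdouble, ih hST]

lemma sum_isingP (hT : T.IsTree) (θ : ℝ) : ∑ x, isingP θ T x = 1 := by
  have hsum := two_pow_card_mul_sum_prod_pairWeight hT θ subset_rfl
  have hcard : T.edgeFinset.card + 1 = p := by simpa using hT.card_edgeFinset
  have hpow : (2 : ℝ) ^ p = 2 ^ T.edgeFinset.card * 2 := by rw [← pow_succ, hcard]
  rw [hpow] at hsum
  have hsum_eq := mul_left_cancel₀ (by positivity) hsum
  simp only [isingP, ← Finset.mul_sum, hsum_eq]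
  norm_num

lemma isingP_pos (hθ0 : 0 < θ) (hθ1 : θ < 1) (T : SimpleGraph (Fin p)) (x : Fin p → Bool) :
    0 < isingP θ T x := by
  refine mul_pos one_half_pos (Finset.prod_pos fun e _ => ?_)
  induction e with
  | _ i j =>
    rw [pairWeight_mk]
    split_ifs
    exacts [sub_pos.2 hθ1, hθ0]

lemma isingP_flip_mul_pairWeight (hT : T.IsTree) (θ : ℝ) (hij : T.Adj i j) (x : Fin p → Bool) :
    isingP θ T (flip T i j x) * pairWeight θ x s(i, j)
      = isingP θ T x * (1 - pairWeight θ x s(i, j)) := by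
  have hothers : ∏ e ∈ T.edgeFinset.erase s(i, j), pairWeight θ (flip T i j x) e
      = ∏ e ∈ T.edgeFinset.erase s(i, j), pairWeight θ x e :=
    Finset.prod_congr rfl fun e he =>
      pairWeight_flip_of_ne θ x (Finset.mem_of_mem_erase he) (Finset.ne_of_mem_erase he)
  have hmem : s(i, j) ∈ T.edgeFinset := mem_edgeFinset.2 hij
  rw [isingP, isingP, ← Finset.mul_prod_erase _ _ hmem, ← Finset.mul_prod_erase _ _ hmem,
    pairWeight_flip_self hT θ hij, hothers]
  ring

lemma mul_isingP_flip_of_ne (hT : T.IsTree) (θ : ℝ) (hij : T.Adj i j) {x : Fin p → Bool}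
    (hx : x i ≠ x j) : θ * isingP θ T (flip T i j x) = (1 - θ) * isingP θ T x := by
  simpa [pairWeight_mk, hx, mul_comm] using isingP_flip_mul_pairWeight hT θ hij x

lemma mul_isingP_flip_of_eq (hT : T.IsTree) (θ : ℝ) (hij : T.Adj i j) {x : Fin p → Bool}
    (hx : x i = x j) : (1 - θ) * isingP θ T (flip T i j x) = θ * isingP θ T x := by
  simpa [pairWeight_mk, hx, mul_comm] using isingP_flip_mul_pairWeight hT θ hij x

lemma mul_isingP_flip_le (hT : T.IsTree) (hθ0 : 0 < θ) (hθ1 : θ ≤ 1 / 2) (hij : T.Adj i j)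
    (x : Fin p → Bool) : θ * isingP θ T (flip T i j x) ≤ (1 - θ) * isingP θ T x := by
  have hpos := isingP_pos hθ0 (by linarith) T
  by_cases hx : x i = x j
  · calc θ * isingP θ T (flip T i j x)
        ≤ (1 - θ) * isingP θ T (flip T i j x) :=
          mul_le_mul_of_nonneg_right (by linarith) (hpos _).le
      _ = θ * isingP θ T x := mul_isingP_flip_of_eq hT θ hij hx
      _ ≤ (1 - θ) * isingP θ T x := mul_le_mul_of_nonneg_right (by linarith) (hpos _).le
  · exact (mul_isingP_flip_of_ne hT θ hij hx).le

/-- The probability under `isingP θ T` of the event that a single sample satisfies `A`. -/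
noncomputable def isingProb (θ : ℝ) (T : SimpleGraph (Fin p)) (A : (Fin p → Bool) → Prop) : ℝ :=
  ∑ x with A x, isingP θ T x

lemma isingProb_eq_sum_filter (θ : ℝ) (T : SimpleGraph (Fin p)) (A : (Fin p → Bool) → Prop)
    [DecidablePred A] : isingProb θ T A = ∑ x with A x, isingP θ T x := by
  unfold isingProb
  congr!

lemma isingProb_not (hT : T.IsTree) (θ : ℝ) (A : (Fin p → Bool) → Prop) :
    isingProb θ T (fun x => ¬ A x) = 1 - isingProb θ T A := by
  rw [eq_sub_iff_add_eq', ← sum_isingP hT θ]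
  simp only [isingProb_eq_sum_filter]
  exact Finset.sum_filter_add_sum_filter_not _ _ _

lemma isingProb_eq_sum_flip (θ : ℝ) (T : SimpleGraph (Fin p)) (i j : Fin p)
    (A : (Fin p → Bool) → Prop) :
    isingProb θ T A = ∑ x with A (flip T i j x), isingP θ T (flip T i j x) := by
  rw [isingProb, Finset.sum_filter, Finset.sum_filter, ← sum_comp_flip T i j]

lemma mul_isingProb_eq_of_flip_ne (hT : T.IsTree) (θ : ℝ) (hij : T.Adj i j)
    {A : (Fin p → Bool) → Prop} (hA : ∀ x, A (flip T i j x) → x i ≠ x j) :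
    θ * isingProb θ T A = (1 - θ) * isingProb θ T fun x => A (flip T i j x) := by
  rw [isingProb_eq_sum_flip θ T i j, isingProb, Finset.mul_sum, Finset.mul_sum]
  exact Finset.sum_congr rfl fun x hx =>
    mul_isingP_flip_of_ne hT θ hij (hA x (Finset.mem_filter_univ x |>.1 hx))

lemma mul_isingProb_le_flip (hT : T.IsTree) (hθ0 : 0 < θ) (hθ1 : θ ≤ 1 / 2) (hij : T.Adj i j)
    (A : (Fin p → Bool) → Prop) :
    θ * isingProb θ T A ≤ (1 - θ) * isingProb θ T fun x => A (flip T i j x) := by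
  rw [isingProb_eq_sum_flip θ T i j, isingProb, Finset.mul_sum, Finset.mul_sum]
  exact Finset.sum_le_sum fun x _ => mul_isingP_flip_le hT hθ0 hθ1 hij x

lemma isingProb_ne_of_adj (hT : T.IsTree) (θ : ℝ) (hij : T.Adj i j) :
    isingProb θ T (fun x => x i ≠ x j) = θ := by
  have hflip (x : Fin p → Bool) : flip T i j x i = flip T i j x j ↔ x i ≠ x j :=
    flip_eq_iff_of_not_reachable hT.connected x
      (not_reachable_deleteEdges_of_adj hT.isAcyclic hij)
  have hratio := mul_isingProb_eq_of_flip_ne hT θ hij (A := fun x => x i = x j)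
    fun x => (hflip x).1
  simp only [hflip] at hratio
  have hcompl := isingProb_not hT θ fun x => x i = x j
  simp only [ne_eq] at hratio ⊢
  linear_combination θ * hcompl - hratio

lemma isingProb_agreementGap_ne_zero_eq_add (θ : ℝ) (T : SimpleGraph (Fin p)) (i j u v : Fin p) :
    isingProb θ T (fun x => agreementGap i j u v x ≠ 0)
      = isingProb θ T (fun x => agreementGap i j u v x = 1)
        + isingProb θ T (fun x => agreementGap i j u v x = -1) := by
  simp only [isingProb, Finset.sum_filter, ← Finset.sum_add_distrib]
  refine Finset.sum_congr rfl fun x _ => ?_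
  rcases agreementGap_cases i j u v x with h | h | h <;> simp [h]

lemma mul_isingProb_agreementGap_eq_neg_one (hT : T.IsTree) (θ : ℝ) (h : IsExchange T i j u v) :
    θ * isingProb θ T (fun x => agreementGap i j u v x = -1)
      = (1 - θ) * isingProb θ T (fun x => agreementGap i j u v x = 1) := by
  have hratio := mul_isingProb_eq_of_flip_ne hT θ h.adj (A := fun x => agreementGap i j u v x = -1)
  simp only [agreementGap_flip hT h, neg_inj] at hratio
  refine hratio fun x hx hij => ?_
  simp only [agreementGap, hij, if_true] at hx
  split_ifs at hx <;> omega

lemma isingProb_agreementGap_eq_one (hT : T.IsTree) (θ : ℝ) (h : IsExchange T i j u v) :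
    isingProb θ T (fun x => agreementGap i j u v x = 1)
      = θ * isingProb θ T (fun x => agreementGap i j u v x ≠ 0) := by
  rw [isingProb_agreementGap_ne_zero_eq_add]
  linear_combination -mul_isingProb_agreementGap_eq_neg_one hT θ h

lemma isingProb_agreementGap_eq_neg_one (hT : T.IsTree) (θ : ℝ) (h : IsExchange T i j u v) :
    isingProb θ T (fun x => agreementGap i j u v x = -1)
      = (1 - θ) * isingProb θ T (fun x => agreementGap i j u v x ≠ 0) := by
  rw [isingProb_agreementGap_ne_zero_eq_add]
  linear_combination mul_isingProb_agreementGap_eq_neg_one hT θ h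

lemma isingProb_agreementGap_eq_zero (hT : T.IsTree) (θ : ℝ) (i j u v : Fin p) :
    isingProb θ T (fun x => agreementGap i j u v x = 0)
      = 1 - isingProb θ T (fun x => agreementGap i j u v x ≠ 0) := by
  simpa only [not_not] using isingProb_not hT θ fun x => agreementGap i j u v x ≠ 0

/-- Flipping across a second edge of the path from `u` to `v` toggles the agreement of `u` and `v`
but not that of `i` and `j`. -/
lemma le_isingProb_agreementGap_ne_zero (hT : T.IsTree) (hθ0 : 0 < θ) (hθ1 : θ ≤ 1 / 2)
    (h : IsExchange T i j u v) :
    θ ≤ isingProb θ T (fun x => agreementGap i j u v x ≠ 0) := by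
  obtain ⟨a, b, hab, hne, hsep⟩ := h.exists_second_edge hT
  have hratio := mul_isingProb_le_flip hT hθ0 hθ1 hab (fun x => agreementGap i j u v x = 0)
  simp only [agreementGap_flip_eq_zero_iff hT.connected h.adj hne.symm hsep] at hratio
  rw [isingProb_agreementGap_eq_zero hT] at hratio
  linarith

lemma isingProb_agreementGap_ne_zero_of_adj (hT : T.IsTree) (θ : ℝ) (hv : T.Adj m v)
    (u : Fin p) : isingProb θ T (fun x => agreementGap u m u v x ≠ 0) = θ := by
  have hiff (x : Fin p → Bool) : agreementGap u m u v x ≠ 0 ↔ x m ≠ x v := by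
    unfold agreementGap
    cases x u <;> cases x m <;> cases x v <;> simp
  simpa only [hiff] using isingProb_ne_of_adj hT θ hv

end IsingModel

section ErrorExponent
open SimpleGraph

variable {p n : ℕ} {θ : ℝ} {T : SimpleGraph (Fin p)} {i j m u v : Fin p}

/-- The tilt `s = √((1 - θ) / θ)`, which minimises the moment generating function `s ↦ 𝔼[s ^ Z]` of
`Z = agreementGap i j u v` for an exchange: there `ℙ(Z = 1) : ℙ(Z = -1) = θ : 1 - θ`. -/
noncomputable def tilt (θ : ℝ) : ℝ := √((1 - θ) / θ)

/-- The exponential of minus the error exponent: the value at `s = tilt θ` of the moment generating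
function of an agreement gap that is nonzero with probability `θ`. -/
noncomputable def chernoffBase (θ : ℝ) : ℝ := 1 - θ * (1 - √(4 * θ * (1 - θ)))

lemma tilt_pos (hθ0 : 0 < θ) (hθ1 : θ < 1) : 0 < tilt θ :=
  Real.sqrt_pos.2 (div_pos (sub_pos.2 hθ1) hθ0)

lemma one_le_tilt (hθ0 : 0 < θ) (hθ1 : θ ≤ 1 / 2) : 1 ≤ tilt θ :=
  Real.one_le_sqrt.2 ((one_le_div hθ0).2 (by linarith))

lemma mul_tilt_eq_mul_inv_tilt (hθ0 : 0 < θ) (hθ1 : θ < 1) :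
    θ * tilt θ = (1 - θ) * (tilt θ)⁻¹ := by
  have hsq : tilt θ ^ 2 = (1 - θ) / θ := Real.sq_sqrt (div_nonneg (sub_pos.2 hθ1).le hθ0.le)
  have htilt := tilt_pos hθ0 hθ1
  field_simp at hsq ⊢
  linarith

lemma two_mul_mul_tilt (hθ0 : 0 < θ) (hθ1 : θ < 1) :
    2 * (θ * tilt θ) = √(4 * θ * (1 - θ)) := by
  have htilt := tilt_pos hθ0 hθ1
  have hsq : 4 * θ * (1 - θ) = (2 * (θ * tilt θ)) ^ 2 := by
    have h := mul_tilt_eq_mul_inv_tilt hθ0 hθ1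
    field_simp at h
    linear_combination -4 * θ * h
  rw [hsq, Real.sqrt_sq (by positivity)]

lemma sqrt_four_mul_mul_one_sub_le_one (θ : ℝ) : √(4 * θ * (1 - θ)) ≤ 1 :=
  Real.sqrt_le_one.2 (by nlinarith [sq_nonneg (2 * θ - 1)])

lemma chernoffBase_pos (hθ0 : 0 ≤ θ) (hθ1 : θ < 1) : 0 < chernoffBase θ := by
  have h := mul_nonneg hθ0 (Real.sqrt_nonneg (4 * θ * (1 - θ)))
  unfold chernoffBase
  linarith

lemma tilt_mul_isingProb_agreementGap_eq_one (hT : T.IsTree) (hθ0 : 0 < θ) (hθ1 : θ < 1)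
    (h : IsExchange T i j u v) :
    tilt θ * isingProb θ T (fun x => agreementGap i j u v x = 1)
      = (tilt θ)⁻¹ * isingProb θ T (fun x => agreementGap i j u v x = -1) := by
  rw [isingProb_agreementGap_eq_one hT θ h, isingProb_agreementGap_eq_neg_one hT θ h]
  linear_combination isingProb θ T (fun x => agreementGap i j u v x ≠ 0)
    * mul_tilt_eq_mul_inv_tilt hθ0 hθ1

lemma sum_isingP_mul_tilt_zpow (hT : T.IsTree) (hθ0 : 0 < θ) (hθ1 : θ < 1)
    (h : IsExchange T i j u v) :
    ∑ x, isingP θ T x * tilt θ ^ agreementGap i j u v x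
      = 1 - isingProb θ T (fun x => agreementGap i j u v x ≠ 0) * (1 - √(4 * θ * (1 - θ))) := by
  have hsum : ∑ x, isingP θ T x * tilt θ ^ agreementGap i j u v x
      = isingProb θ T (fun x => agreementGap i j u v x = 0)
        + tilt θ * isingProb θ T (fun x => agreementGap i j u v x = 1)
        + (tilt θ)⁻¹ * isingProb θ T (fun x => agreementGap i j u v x = -1) := by
    simpa only [isingProb_eq_sum_filter] using
      sum_mul_zpow_eq (agreementGap_cases i j u v) (tilt θ)
  rw [hsum, ← tilt_mul_isingProb_agreementGap_eq_one hT hθ0 hθ1 h,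
    isingProb_agreementGap_eq_one hT θ h, isingProb_agreementGap_eq_zero hT,
    ← two_mul_mul_tilt hθ0 hθ1]
  ring

lemma iidProb_eq_sum_filter (P : (Fin p → Bool) → ℝ) (n : ℕ) (A : (Fin n → Fin p → Bool) → Prop)
    [DecidablePred A] : iidProb P n {xs | A xs} = ∑ xs with A xs, ∏ k, P (xs k) := by
  rw [iidProb, Finset.sum_filter]
  congr!

lemma iidProb_mono {P : (Fin p → Bool) → ℝ} (hP : ∀ x, 0 ≤ P x)
    {A B : Set (Fin n → Fin p → Bool)} (h : A ⊆ B) : iidProb P n A ≤ iidProb P n B := by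
  refine Finset.sum_le_sum fun xs _ => ?_
  have hprod : 0 ≤ ∏ k, P (xs k) := Finset.prod_nonneg fun k _ => hP _
  split_ifs with hA hB hB
  exacts [le_rfl, absurd (h hA) hB, hprod, le_rfl]

lemma iidProb_iUnion_le {ι : Type*} [Fintype ι] {P : (Fin p → Bool) → ℝ} (hP : ∀ x, 0 ≤ P x)
    (A : ι → Set (Fin n → Fin p → Bool)) :
    iidProb P n (⋃ t, A t) ≤ ∑ t, iidProb P n (A t) := by
  unfold iidProb
  rw [Finset.sum_comm]
  refine Finset.sum_le_sum fun xs _ => ?_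
  have hterm (t : ι) : 0 ≤ if xs ∈ A t then ∏ k, P (xs k) else 0 := by
    split_ifs
    exacts [Finset.prod_nonneg fun k _ => hP _, le_rfl]
  split_ifs with hxs
  · obtain ⟨t, ht⟩ := Set.mem_iUnion.1 hxs
    simpa only [if_pos ht] using Finset.single_le_sum (fun t _ => hterm t) (Finset.mem_univ t)
  · exact Finset.sum_nonneg fun t _ => hterm t

/-- The event that replacing the edge `s(i, j)` by `s(u, v)` does not decrease the empirical
weight. -/
def swapEvent (n : ℕ) (i j u v : Fin p) : Set (Fin n → Fin p → Bool) :=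
  {xs | 0 ≤ ∑ k, agreementGap i j u v (xs k)}

lemma iidProb_swapEvent_le (hT : T.IsTree) (hθ0 : 0 < θ) (hθ1 : θ ≤ 1 / 2)
    (h : IsExchange T i j u v) (n : ℕ) :
    iidProb (isingP θ T) n (swapEvent n i j u v) ≤ chernoffBase θ ^ n := by
  have hθ1' : θ < 1 := by linarith
  have hP (x : Fin p → Bool) : 0 ≤ isingP θ T x := (isingP_pos hθ0 hθ1' T x).le
  have htilt := tilt_pos hθ0 hθ1'
  calc iidProb (isingP θ T) n (swapEvent n i j u v)
      ≤ (∑ x, isingP θ T x * tilt θ ^ agreementGap i j u v x) ^ n := by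
        rw [swapEvent, iidProb_eq_sum_filter]
        exact sum_nonneg_le_mgf_pow hP _ (one_le_tilt hθ0 hθ1) n
    _ ≤ chernoffBase θ ^ n := by
        refine pow_le_pow_left₀ (Finset.sum_nonneg fun x _ => ?_) ?_ n
        · exact mul_nonneg (hP x) (by positivity)
        · rw [sum_isingP_mul_tilt_zpow hT hθ0 hθ1' h, chernoffBase]
          gcongr
          · exact sub_nonneg.2 (sqrt_four_mul_mul_one_sub_le_one θ)
          · exact le_isingProb_agreementGap_ne_zero hT hθ0 hθ1 h

lemma le_iidProb_swapEvent_of_adj (hT : T.IsTree) (hθ0 : 0 < θ) (hθ1 : θ < 1)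
    (hu : T.Adj m u) (hv : T.Adj m v) (huv : u ≠ v) (n : ℕ) :
    (1 - θ) / chernoffBase θ * chernoffBase θ ^ n
      ≤ (n + 1) * iidProb (isingP θ T) n (swapEvent n u m u v) := by
  have h := isExchange_of_adj_of_adj hT.isAcyclic hu hv huv
  have hbase := chernoffBase_pos hθ0.le hθ1
  have hP (x : Fin p → Bool) : 0 ≤ isingP θ T x := (isingP_pos hθ0 hθ1 T x).le
  have hmgf : ∑ x, isingP θ T x * tilt θ ^ agreementGap u m u v x = chernoffBase θ := by
    rw [sum_isingP_mul_tilt_zpow hT hθ0 hθ1 h, isingProb_agreementGap_ne_zero_of_adj hT θ hv,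
      chernoffBase]
  have hzero : isingProb θ T (fun x => agreementGap u m u v x = 0) = 1 - θ := by
    rw [isingProb_agreementGap_eq_zero hT, isingProb_agreementGap_ne_zero_of_adj hT θ hv]
  have hreturn := sum_zero_mul_mgf_pow_le hP (agreementGap_cases u m u v) (tilt_pos hθ0 hθ1)
    (by simpa only [isingProb_eq_sum_filter] using
      tilt_mul_isingProb_agreementGap_eq_one hT hθ0 hθ1 h) n
  rw [← isingProb_eq_sum_filter, hzero, hmgf, ← iidProb_eq_sum_filter] at hreturn
  have hmono : iidProb (isingP θ T) n {xs | ∑ k, agreementGap u m u v (xs k) = 0}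
      ≤ iidProb (isingP θ T) n (swapEvent n u m u v) :=
    iidProb_mono hP fun xs hxs => (Set.mem_ofPred.1 hxs).ge
  rw [div_mul_eq_mul_div, div_le_iff₀ hbase]
  calc (1 - θ) * chernoffBase θ ^ n
      ≤ (n + 1) * chernoffBase θ
          * iidProb (isingP θ T) n {xs | ∑ k, agreementGap u m u v (xs k) = 0} := hreturn
    _ ≤ (n + 1) * chernoffBase θ * iidProb (isingP θ T) n (swapEvent n u m u v) := by gcongr
    _ = _ := by ring

lemma AhatSym_le_AhatSym_iff (hn : 0 < n) (xs : Fin n → Fin p → Bool) (i j u v : Fin p) :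
    AhatSym xs s(i, j) ≤ AhatSym xs s(u, v) ↔ xs ∈ swapEvent n i j u v := by
  have hcast (a b : Fin p) : AhatSym xs s(a, b)
      = ((∑ k, if xs k a = xs k b then 1 else 0 : ℤ) : ℝ) / n := by
    change Ahat xs a b = _
    rw [Ahat, Finset.card_filter]
    push_cast
    rfl
  rw [hcast, hcast, div_le_div_iff_of_pos_right (Nat.cast_pos.2 hn), Int.cast_le]
  simp only [swapEvent, agreementGap, Set.mem_ofPred_eq, Finset.sum_sub_distrib, sub_nonneg]

/-- The event that `T` is not the unique spanning tree of maximum empirical weight. -/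
def errorEvent (T : SimpleGraph (Fin p)) (n : ℕ) : Set (Fin n → Fin p → Bool) :=
  {xs | ∃ T' : SimpleGraph (Fin p), T'.IsTree ∧ T'.edgeSet ≠ T.edgeSet ∧
    ∑ e ∈ T.edgeFinset, AhatSym xs e ≤ ∑ e ∈ T'.edgeFinset, AhatSym xs e}

/-- The exchanges `(i, j, u, v)` of `T`. -/
abbrev Exchanges (T : SimpleGraph (Fin p)) : Type :=
  {t : Fin p × Fin p × Fin p × Fin p // IsExchange T t.1 t.2.1 t.2.2.1 t.2.2.2}

lemma mem_errorEvent_iff (hT : T.IsTree) (hn : 0 < n) (xs : Fin n → Fin p → Bool) :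
    xs ∈ errorEvent T n ↔ ∃ i j u v, IsExchange T i j u v ∧ xs ∈ swapEvent n i j u v := by
  simp only [← AhatSym_le_AhatSym_iff hn]
  exact exists_isTree_sum_le_iff_exists_isExchange (AhatSym xs) hT

lemma iidProb_errorEvent_le (hT : T.IsTree) (hθ0 : 0 < θ) (hθ1 : θ ≤ 1 / 2) (hn : 0 < n) :
    iidProb (isingP θ T) n (errorEvent T n)
      ≤ Fintype.card (Exchanges T) * chernoffBase θ ^ n := by
  have hP (x : Fin p → Bool) : 0 ≤ isingP θ T x := (isingP_pos hθ0 (by linarith) T x).le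
  have hunion : errorEvent T n
      = ⋃ t : Exchanges T, swapEvent n t.1.1 t.1.2.1 t.1.2.2.1 t.1.2.2.2 := by
    ext xs
    simp [mem_errorEvent_iff hT hn]
  calc iidProb (isingP θ T) n (errorEvent T n)
      ≤ ∑ t : Exchanges T,
          iidProb (isingP θ T) n (swapEvent n t.1.1 t.1.2.1 t.1.2.2.1 t.1.2.2.2) :=
        hunion ▸ iidProb_iUnion_le hP _
    _ ≤ ∑ _t : Exchanges T, chernoffBase θ ^ n :=
        Finset.sum_le_sum fun t _ => iidProb_swapEvent_le hT hθ0 hθ1 t.2 n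
    _ = Fintype.card (Exchanges T) * chernoffBase θ ^ n := by simp

lemma le_iidProb_errorEvent (hT : T.IsTree) (hθ0 : 0 < θ) (hθ1 : θ < 1) (hu : T.Adj m u)
    (hv : T.Adj m v) (huv : u ≠ v) (hn : 0 < n) :
    (1 - θ) / chernoffBase θ * chernoffBase θ ^ n
      ≤ (n + 1) * iidProb (isingP θ T) n (errorEvent T n) := by
  have h := isExchange_of_adj_of_adj hT.isAcyclic hu hv huv
  refine (le_iidProb_swapEvent_of_adj hT hθ0 hθ1 hu hv huv n).trans ?_
  gcongr
  exact iidProb_mono (fun x => (isingP_pos hθ0 hθ1 T x).le) fun xs hxs =>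
    (mem_errorEvent_iff hT hn xs).2 ⟨u, m, u, v, h, hxs⟩

end ErrorExponent

end IsingTree

/-- the error exponent of the event that the true tree `T` fails to be the
unique maximum-weight spanning tree for the empirical weights `Â` equals
`-log(1 - θ(1 - √(4θ(1-θ))))`, independently of `p` and of the structure of `T`. -/
theorem stmt6 (p : ℕ) (hp : 3 ≤ p) (θ : ℝ) (hθ0 : 0 < θ) (hθ1 : θ < 1 / 2)
    (T : SimpleGraph (Fin p)) (hT : T.IsTree) :
    Filter.Tendsto (fun n : ℕ =>
      -(1 / (n : ℝ)) * Real.log (iidProb (isingP θ T) n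
        {xs | ∃ T' : SimpleGraph (Fin p), T'.IsTree ∧ T'.edgeSet ≠ T.edgeSet ∧
          ∑ e ∈ T.edgeFinset, AhatSym xs e ≤ ∑ e ∈ T'.edgeFinset, AhatSym xs e}))
      Filter.atTop
      (nhds (-Real.log (1 - θ * (1 - Real.sqrt (4 * θ * (1 - θ)))))) := by
  obtain ⟨m, u, v, hu, hv, huv⟩ := IsingTree.exists_adj_adj_ne hT.connected (by simpa using hp)
  have hθ1' : θ < 1 := by linarith
  have hbase := IsingTree.chernoffBase_pos hθ0.le hθ1'
  have hexchange : Nonempty (IsingTree.Exchanges T) :=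
    ⟨⟨(u, m, u, v), IsingTree.isExchange_of_adj_of_adj hT.isAcyclic hu hv huv⟩⟩
  exact IsingTree.tendsto_neg_inv_mul_log_of_le_of_le hbase
    (div_pos (sub_pos.2 hθ1') hbase) (Nat.cast_pos.2 Fintype.card_pos)
    (fun n hn => IsingTree.le_iidProb_errorEvent hT hθ0 hθ1' hu hv huv hn)
    (fun n hn => IsingTree.iidProb_errorEvent_le hT hθ0 hθ1.le hn)
end

section
/- For every θ ∈ (0, 1/2), the Bresler–Karzand exponent K^{BK}(θ) := θ·(1−2θ)²/8 satisfies K^{BK}(θ) < K(θ)/3, where K(θ) := −log(1 − θ·(1 − √(4θ(1−θ)))). -/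
open scoped Classical BigOperators
open Filter

/-!
Since `4θ(1 - θ) = 1 - (1 - 2θ)²`, the tangent line of the square root at `1` gives
`1 - √(4θ(1 - θ)) ≥ (1 - 2θ)² / 2`, and `-log (1 - x) > x` turns this into
`K(θ) > θ(1 - 2θ)² / 2 = 4 K^{BK}(θ)`. Both estimates are tight as `θ → 1/2`, so the factor `4` is
the best possible.
-/

theorem lt_neg_log_one_sub {x : ℝ} (hx1 : x < 1) (hx0 : x ≠ 0) : x < -Real.log (1 - x) := by
  have hlog : Real.log (1 - x) < 1 - x - 1 :=
    Real.log_lt_sub_one_of_pos (sub_pos.2 hx1) (by simpa using hx0)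
  linarith

theorem half_sq_le_one_sub_sqrt_four_mul_mul_one_sub {θ : ℝ} (hθ0 : 0 ≤ θ) (hθ1 : θ ≤ 1) :
    (1 - 2 * θ) ^ 2 / 2 ≤ 1 - Real.sqrt (4 * θ * (1 - θ)) := by
  have hnonneg : 0 ≤ θ * (1 - θ) := mul_nonneg hθ0 (sub_nonneg.2 hθ1)
  have htangent : Real.sqrt (1 + -(1 - 2 * θ) ^ 2) ≤ 1 + -(1 - 2 * θ) ^ 2 / 2 :=
    Real.sqrt_one_add_le (by linarith)
  rw [show 4 * θ * (1 - θ) = 1 + -(1 - 2 * θ) ^ 2 by ring]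
  linarith

theorem stmt8_general (θ : ℝ) (hθ0 : 0 < θ) (hθ1 : θ < 1) (hθ : θ ≠ 1 / 2) :
    θ * (1 - 2 * θ) ^ 2 / 8 < Kexp θ / 4 := by
  set s := Real.sqrt (4 * θ * (1 - θ))
  have hsq_pos : 0 < (1 - 2 * θ) ^ 2 := sq_pos_of_ne_zero fun h => hθ (by linarith)
  have hsqrt : (1 - 2 * θ) ^ 2 / 2 ≤ 1 - s :=
    half_sq_le_one_sub_sqrt_four_mul_mul_one_sub hθ0.le hθ1.le
  have hpos : 0 < θ * (1 - s) := mul_pos hθ0 (by linarith)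
  have hlt_one : θ * (1 - s) < 1 :=
    (mul_le_of_le_one_right hθ0.le (sub_le_self 1 (Real.sqrt_nonneg _))).trans_lt hθ1
  calc θ * (1 - 2 * θ) ^ 2 / 8 = θ * ((1 - 2 * θ) ^ 2 / 2) / 4 := by ring
    _ ≤ θ * (1 - s) / 4 := by gcongr
    _ < Kexp θ / 4 := by
      have hlog : θ * (1 - s) < Kexp θ := lt_neg_log_one_sub hlt_one hpos.ne'
      gcongr

/-- the Bresler-Karzand exponent is strictly less than a third of the
true error exponent. -/
theorem stmt8 (θ : ℝ) (hθ0 : 0 < θ) (hθ1 : θ < 1 / 2) :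
    θ * (1 - 2 * θ) ^ 2 / 8
      < (-Real.log (1 - θ * (1 - Real.sqrt (4 * θ * (1 - θ))))) / 3 := by
  have hquarter := stmt8_general θ hθ0 (by linarith) hθ1.ne
  rw [Kexp] at hquarter
  linarith [show 0 ≤ θ * (1 - 2 * θ) ^ 2 by positivity]
end

section
/- Let θ ∈ (0, 1/2), let P = P_{T,θ} on {0,1}³ for the tree T with edge set {{1,2},{2,3}}, and let x_1,…,x_n be i.i.d. samples from P. Define K(θ) := −log(1 − θ·(1 − √(4θ(1−θ)))), σ² := θ·√(4θ(1−θ))·e^{K(θ)}, and f̃(n) := (e^{−n·K(θ)}/√(2πσ²n))·[1 + (1−3σ²)/(8σ²n)]. Then ℙ(Â_{1,3} = Â_{1,2}) = f̃(n)·(1 + o(n^{−1})); that is, n·( ℙ(Â_{1,3} = Â_{1,2}) / f̃(n) − 1 ) → 0 as n → ∞. -/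
open scoped Classical BigOperators
open Filter

/-!
In one sample let `D ∈ {-1, 0, 1}` be the difference of the agreement indicators of the pairs
`{1, 3}` and `{1, 2}`. The two empirical weights tie exactly when the `n` copies of `D` sum to zero,
so the tie probability is the constant coefficient of `(∑ x, P x * ζ ^ D x) ^ n`, where
`∑ x, P x * ζ ^ D x = (1 - θ) + θ² ζ + θ (1 - θ) ζ⁻¹`. We extract it by integrating over the circle
of radius `√((1 - θ) / θ)`, which passes through the saddle point: there the two non-constant terms
have equal modulus, and the generating function becomes the real quantity
`e^{-K} (1 - σ² (1 - cos t))`. Hence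
`ℙ(tie) = e^{-nK} / (2π) * ∫ t in -π..π, (1 - σ² (1 - cos t)) ^ n`.

Laplace's method, carried to second order, evaluates this integral. Near `0` the base is
`exp (-σ² t² / 2) + (σ² / 24 - σ⁴ / 8) t⁴ + o(t⁴)`; after the substitution `t = x / √n` the quartic
term contributes its Gaussian fourth moment divided by `n`, which is the relative correction
`(1 - 3σ²) / (8σ² n)`. Dominated convergence justifies integrating the pointwise expansion.
-/

section

open Real Asymptotics MeasureTheory Topology

section Limits

variable {ι : Type*} {l : Filter ι} {c d : ι → ℝ} {L : ℝ}

theorem tendsto_zero_of_tendsto_atTop_mul (hc : Tendsto c l atTop)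
    (hcd : Tendsto (fun i => c i * d i) l (𝓝 L)) : Tendsto d l (𝓝 0) := by
  refine (hcd.div_atTop hc).congr' ?_
  filter_upwards [hc.eventually_ne_atTop 0] with i hi
  exact mul_div_cancel_left₀ _ hi

theorem tendsto_mul_sub_of_hasDerivAt {f : ℝ → ℝ} {f' x : ℝ} (hf : HasDerivAt f f' x)
    (hc : Tendsto c l atTop) (hcd : Tendsto (fun i => c i * d i) l (𝓝 L)) :
    Tendsto (fun i => c i * (f (x + d i) - f x)) l (𝓝 (L * f')) := by
  simpa using hf.hasFDerivAt.hasFDerivWithinAt.lim (tendsto_zero_of_tendsto_atTop_mul hc hcd)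
    (.of_forall fun _ => Set.mem_univ _) hcd

theorem tendsto_natCast_mul_one_add_pow_sub_one {g : ℕ → ℝ}
    (hg : Tendsto (fun n : ℕ => (n : ℝ) ^ 2 * g n) atTop (𝓝 L)) :
    Tendsto (fun n : ℕ => (n : ℝ) * ((1 + g n) ^ n - 1)) atTop (𝓝 L) := by
  have hn : Tendsto (fun n : ℕ => (n : ℝ)) atTop atTop := tendsto_natCast_atTop_atTop
  have hn2 : Tendsto (fun n : ℕ => (n : ℝ) ^ 2) atTop atTop :=
    (tendsto_pow_atTop two_ne_zero).comp hn
  have h_log : Tendsto (fun n : ℕ => (n : ℝ) * (n * log (1 + g n))) atTop (𝓝 L) := by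
    simpa [sq, mul_assoc] using tendsto_mul_sub_of_hasDerivAt (hasDerivAt_log one_ne_zero) hn2 hg
  have h_exp : Tendsto (fun n : ℕ => (n : ℝ) * (exp (n * log (1 + g n)) - 1)) atTop (𝓝 L) := by
    simpa using tendsto_mul_sub_of_hasDerivAt (hasDerivAt_exp 0) hn h_log
  refine h_exp.congr' ?_
  filter_upwards [(tendsto_zero_of_tendsto_atTop_mul hn2 hg).eventually_const_lt neg_one_lt_zero]
    with n hgn
  rw [exp_nat_mul, exp_log (by linarith)]

theorem tendsto_natCast_mul_div_sub_one {a : ℕ → ℝ} {S : ℝ} (hS : S ≠ 0) (r : ℝ)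
    (ha : Tendsto (fun n : ℕ => (n : ℝ) * (a n - S)) atTop (𝓝 (r * S))) :
    Tendsto (fun n : ℕ => (n : ℝ) * (a n / (S * (1 + r / n)) - 1)) atTop (𝓝 0) := by
  have h_den : Tendsto (fun n : ℕ => S * (1 + r / (n : ℝ))) atTop (𝓝 S) := by
    simpa using ((tendsto_const_div_atTop_nhds_zero_nat r).const_add 1).const_mul S
  have h_lim := (ha.sub_const (r * S)).div h_den hS
  rw [sub_self, zero_div] at h_lim
  refine h_lim.congr' ?_
  filter_upwards [eventually_ne_atTop 0, h_den.eventually_ne hS] with n hn h_ne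
  simp only [Pi.div_apply]
  rw [div_sub_one h_ne, ← mul_div_assoc]
  congr 1
  field_simp
  ring

theorem tendsto_const_div_sqrt_natCast (x : ℝ) :
    Tendsto (fun n : ℕ => x / √(n : ℝ)) atTop (𝓝 0) :=
  tendsto_const_nhds.div_atTop (tendsto_sqrt_atTop.comp tendsto_natCast_atTop_atTop)

end Limits

section GaussianMoments

theorem integrable_pow_mul_exp_neg_mul_sq {b : ℝ} (hb : 0 < b) (k : ℕ) :
    Integrable (fun x : ℝ => x ^ k * exp (-b * x ^ 2)) := by
  simpa using integrable_rpow_mul_exp_neg_mul_sq hb (s := k) (by linarith [k.cast_nonneg (α := ℝ)])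

theorem integral_pow_four_mul_exp_neg_mul_sq {b : ℝ} (hb : 0 < b) :
    ∫ x : ℝ, x ^ 4 * exp (-b * x ^ 2) = 3 / (4 * b ^ 2) * √(π / b) := by
  have h_half : ∫ x in Set.Ioi (0 : ℝ), x ^ 4 * exp (-b * x ^ 2) =
      b ^ (-(5 / 2) : ℝ) * (1 / 2) * Gamma (5 / 2) := by
    have h := integral_rpow_mul_exp_neg_mul_rpow (p := 2) (q := 4) two_pos (by norm_num) hb
    norm_num at h ⊢
    exact h
  have h_gamma : Gamma (5 / 2) = 3 / 4 * √π := by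
    have h := Gamma_nat_add_half 2
    norm_num [Nat.doubleFactorial] at h
    linarith
  have h_rpow : b ^ (-(5 / 2) : ℝ) = (b ^ 2)⁻¹ * (√b)⁻¹ := by
    rw [show (-(5 / 2) : ℝ) = -2 + -(1 / 2) by norm_num, rpow_add hb, rpow_neg hb.le,
      rpow_neg hb.le, sqrt_eq_rpow, rpow_two]
  calc ∫ x : ℝ, x ^ 4 * exp (-b * x ^ 2)
      = ∫ x : ℝ, |x| ^ 4 * exp (-b * |x| ^ 2) := by
        simp only [sq_abs, Even.pow_abs (by decide : Even 4)]
    _ = 2 * ∫ x in Set.Ioi (0 : ℝ), x ^ 4 * exp (-b * x ^ 2) :=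
        integral_comp_abs (f := fun x => x ^ 4 * exp (-b * x ^ 2))
    _ = 3 / (4 * b ^ 2) * √(π / b) := by
        rw [h_half, h_gamma, h_rpow, sqrt_div' _ hb.le]
        field_simp

end GaussianMoments

theorem exists_forall_abs_le_mul_pow {g : ℝ → ℝ} {s : Set ℝ} {B : ℝ} {k : ℕ}
    (hg : g =O[𝓝 0] fun y => y ^ k) (hB : ∀ y ∈ s, |g y| ≤ B) :
    ∃ C, ∀ y ∈ s, |g y| ≤ C * |y| ^ k := by
  obtain ⟨A, hA, h_near⟩ := hg.exists_nonneg
  obtain ⟨ε, hε, h_ball⟩ := Metric.eventually_nhds_iff.mp h_near.bound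
  refine ⟨max A (B / ε ^ k), fun y hy => ?_⟩
  rcases lt_or_ge |y| ε with h | h
  · calc |g y| ≤ A * |y| ^ k := by simpa using h_ball (by simpa using h)
      _ ≤ max A (B / ε ^ k) * |y| ^ k := by gcongr; exact le_max_left ..
  · have : 0 ≤ B := (abs_nonneg _).trans (hB y hy)
    calc |g y| ≤ B / ε ^ k * ε ^ k := by rw [div_mul_cancel₀ _ (by positivity)]; exact hB y hy
      _ ≤ max A (B / ε ^ k) * |y| ^ k := by gcongr; exact le_max_right ..

section LaplaceMethod

variable {f : ℝ → ℝ} {b c κ δ : ℝ} {n : ℕ}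

theorem exp_neg_mul_div_sqrt_sq_pow (b x : ℝ) (hn : n ≠ 0) :
    exp (-b * (x / √(n : ℝ)) ^ 2) ^ n = exp (-b * x ^ 2) := by
  rw [← exp_nat_mul, div_pow, sq_sqrt n.cast_nonneg]
  congr 1
  field_simp

theorem tendsto_sq_mul_comp_div_sqrt_sub_exp
    (hf : (fun y => f y - (exp (-b * y ^ 2) + κ * y ^ 4)) =o[𝓝 0] fun y => y ^ 4) (x : ℝ) :
    Tendsto (fun n : ℕ => (n : ℝ) ^ 2 * (f (x / √(n : ℝ)) - exp (-b * (x / √(n : ℝ)) ^ 2))) atTop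
      (𝓝 (κ * x ^ 4)) := by
  have h_scale : (fun n : ℕ => (n : ℝ) ^ 2 * (x / √(n : ℝ)) ^ 4) =ᶠ[atTop] fun _ => x ^ 4 := by
    filter_upwards [eventually_ne_atTop 0] with n hn
    rw [div_pow, show √(n : ℝ) ^ 4 = (√(n : ℝ) ^ 2) ^ 2 by ring, sq_sqrt n.cast_nonneg]
    field_simp
  have h_rem := ((isBigO_refl (fun n : ℕ => (n : ℝ) ^ 2) atTop).mul_isLittleO
    (hf.comp_tendsto (tendsto_const_div_sqrt_natCast x))).trans_isBigO
      (h_scale.isBigO.trans (isBigO_const_const (x ^ 4) (one_ne_zero (α := ℝ)) _))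
  have h_lim := ((isLittleO_one_iff ℝ).mp h_rem).add (h_scale.tendsto.const_mul κ)
  rw [zero_add] at h_lim
  refine h_lim.congr fun n => ?_
  simp only [Function.comp_apply]
  ring

theorem tendsto_natCast_mul_pow_sub_exp
    (hf : (fun y => f y - (exp (-b * y ^ 2) + κ * y ^ 4)) =o[𝓝 0] fun y => y ^ 4) (x : ℝ) :
    Tendsto (fun n : ℕ => (n : ℝ) * (f (x / √(n : ℝ)) ^ n - exp (-b * x ^ 2))) atTop
      (𝓝 (κ * x ^ 4 * exp (-b * x ^ 2))) := by
  set u : ℕ → ℝ := fun n => f (x / √(n : ℝ))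
  set w : ℕ → ℝ := fun n => exp (-b * (x / √(n : ℝ)) ^ 2)
  have hw0 (n : ℕ) : w n ≠ 0 := (exp_pos _).ne'
  have hw1 : Tendsto w atTop (𝓝 1) := by
    have h_cont : Continuous fun y : ℝ => exp (-b * y ^ 2) := by fun_prop
    simpa [w, Function.comp_def] using (h_cont.tendsto 0).comp (tendsto_const_div_sqrt_natCast x)
  have h_ratio : Tendsto (fun n : ℕ => (n : ℝ) ^ 2 * (u n / w n - 1)) atTop (𝓝 (κ * x ^ 4)) := by
    have h := (tendsto_sq_mul_comp_div_sqrt_sub_exp hf x).div hw1 one_ne_zero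
    rw [div_one] at h
    refine h.congr fun n => ?_
    rw [Pi.div_apply, div_sub_one (hw0 n), mul_div_assoc]
  refine ((tendsto_natCast_mul_one_add_pow_sub_one h_ratio).mul_const _).congr' ?_
  filter_upwards [eventually_ne_atTop 0] with n hn
  rw [add_sub_cancel, div_pow, ← exp_neg_mul_div_sqrt_sq_pow b x hn, mul_assoc, sub_one_mul,
    div_mul_cancel₀ _ (pow_ne_zero n (hw0 n))]

/-- The integrand of `√n * ∫ t in -δ..δ, f t ^ n` after the substitution `t = x / √n`, extended by
zero to the real line. -/
noncomputable def rescaledPow (f : ℝ → ℝ) (δ : ℝ) (n : ℕ) (x : ℝ) : ℝ :=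
  if |x / √(n : ℝ)| ≤ δ then f (x / √(n : ℝ)) ^ n else 0

theorem abs_div_sqrt_natCast_le_iff (hn : n ≠ 0) (x : ℝ) :
    |x / √(n : ℝ)| ≤ δ ↔ x ∈ Set.Icc (-δ * √(n : ℝ)) (δ * √(n : ℝ)) := by
  have h_sqrt : 0 < √(n : ℝ) := by positivity
  rw [abs_le, le_div_iff₀ h_sqrt, div_le_iff₀ h_sqrt, Set.mem_Icc]

theorem rescaledPow_eq_indicator (f : ℝ → ℝ) (δ : ℝ) (hn : n ≠ 0) :
    rescaledPow f δ n = (Set.Icc (-δ * √(n : ℝ)) (δ * √(n : ℝ))).indicator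
      fun x => f (x / √(n : ℝ)) ^ n := by
  ext x
  simp only [rescaledPow, abs_div_sqrt_natCast_le_iff hn, Set.indicator_apply]

theorem integrable_rescaledPow (hf : ContinuousOn f (Set.Icc (-δ) δ)) (hn : n ≠ 0) :
    Integrable (rescaledPow f δ n) := by
  have h_maps : Set.MapsTo (fun x => x / √(n : ℝ)) (Set.Icc (-δ * √(n : ℝ)) (δ * √(n : ℝ)))
      (Set.Icc (-δ) δ) :=
    fun x hx => abs_le.mp ((abs_div_sqrt_natCast_le_iff hn x).mpr hx)
  have h_cont := (hf.comp (by fun_prop) h_maps).pow n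
  rw [rescaledPow_eq_indicator f δ hn, integrable_indicator_iff measurableSet_Icc]
  exact h_cont.integrableOn_Icc

theorem integral_rescaledPow (f : ℝ → ℝ) (hδ : 0 ≤ δ) (hn : n ≠ 0) :
    ∫ x, rescaledPow f δ n x = √(n : ℝ) * ∫ t in (-δ)..δ, f t ^ n := by
  have h_sqrt : √(n : ℝ) ≠ 0 := by positivity
  have h_le : -δ * √(n : ℝ) ≤ δ * √(n : ℝ) := by gcongr; linarith
  rw [rescaledPow_eq_indicator f δ hn, integral_indicator measurableSet_Icc,
    integral_Icc_eq_integral_Ioc, ← intervalIntegral.integral_of_le h_le,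
    intervalIntegral.integral_comp_div (fun t => f t ^ n) h_sqrt, smul_eq_mul,
    mul_div_cancel_right₀ _ h_sqrt, mul_div_cancel_right₀ _ h_sqrt]

theorem tendsto_natCast_mul_rescaledPow_sub_exp (hδ : 0 < δ)
    (hf : (fun y => f y - (exp (-b * y ^ 2) + κ * y ^ 4)) =o[𝓝 0] fun y => y ^ 4) (x : ℝ) :
    Tendsto (fun n : ℕ => (n : ℝ) * (rescaledPow f δ n x - exp (-b * x ^ 2))) atTop
      (𝓝 (κ * x ^ 4 * exp (-b * x ^ 2))) := by
  refine (tendsto_natCast_mul_pow_sub_exp hf x).congr' ?_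
  have h_small : ∀ᶠ n : ℕ in atTop, |x / √(n : ℝ)| ≤ δ :=
    (tendsto_const_div_sqrt_natCast x).abs.eventually_le_const (by simpa using hδ)
  filter_upwards [h_small] with n hn
  rw [rescaledPow, if_pos hn]

theorem abs_natCast_mul_pow_sub_pow_le {u w r q : ℝ} (hq : 0 ≤ q) (hu : |u| ≤ exp (-q))
    (hw : |w| ≤ exp (-q)) (huw : |u - w| ≤ r) (hn : 2 ≤ n) :
    |n * (u ^ n - w ^ n)| ≤ n ^ 2 * r * exp (-(n * q / 2)) := by
  have hn' : (2 : ℝ) ≤ n := by exact_mod_cast hn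
  have hr : 0 ≤ r := (abs_nonneg _).trans huw
  have h_max : max |u| |w| ^ (n - 1) ≤ exp (-(n * q / 2)) :=
    calc max |u| |w| ^ (n - 1) ≤ exp (-q) ^ (n - 1) := by gcongr; exact max_le hu hw
      _ ≤ exp (-(n * q / 2)) := by
        rw [← exp_nat_mul, exp_le_exp, Nat.cast_sub (by omega), Nat.cast_one]
        nlinarith
  calc |n * (u ^ n - w ^ n)| = n * |u ^ n - w ^ n| := by rw [abs_mul, Nat.abs_cast]
    _ ≤ n * (|u - w| * n * max |u| |w| ^ (n - 1)) := by gcongr; exact abs_pow_sub_pow_le ..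
    _ ≤ n * (r * n * exp (-(n * q / 2))) := by gcongr
    _ = n ^ 2 * r * exp (-(n * q / 2)) := by ring

theorem abs_natCast_mul_rescaledPow_sub_exp_le {C : ℝ} (hc : 0 ≤ c) (hcb : c ≤ b) (hδ : 0 < δ)
    (hC : 0 ≤ C) (h_decay : ∀ y ∈ Set.Icc (-δ) δ, |f y| ≤ exp (-c * y ^ 2))
    (h_close : ∀ y ∈ Set.Icc (-δ) δ, |f y - exp (-b * y ^ 2)| ≤ C * |y| ^ 4)
    (hn : 2 ≤ n) (x : ℝ) :
    |n * (rescaledPow f δ n x - exp (-b * x ^ 2))| ≤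
      C * (x ^ 4 * exp (-(c / 2) * x ^ 2)) + (δ ^ 2)⁻¹ * (x ^ 2 * exp (-(c / 2) * x ^ 2)) := by
  have hn0 : n ≠ 0 := by omega
  have h_sq : n * (x / √(n : ℝ)) ^ 2 = x ^ 2 := by
    rw [div_pow, sq_sqrt n.cast_nonneg]
    field_simp
  by_cases hx : |x / √(n : ℝ)| ≤ δ
  · rw [rescaledPow, if_pos hx, ← exp_neg_mul_div_sqrt_sq_pow b x hn0]
    set y := x / √(n : ℝ)
    have hy : y ∈ Set.Icc (-δ) δ := abs_le.mp hx
    have h_gauss : |exp (-b * y ^ 2)| ≤ exp (-(c * y ^ 2)) := by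
      rw [abs_exp, exp_le_exp]
      nlinarith [sq_nonneg y]
    have h_bound := abs_natCast_mul_pow_sub_pow_le (by positivity)
      ((h_decay y hy).trans_eq (by rw [neg_mul])) h_gauss (h_close y hy) hn
    calc |n * (f y ^ n - exp (-b * y ^ 2) ^ n)|
        ≤ n ^ 2 * (C * |y| ^ 4) * exp (-(n * (c * y ^ 2) / 2)) := h_bound
      _ = C * ((n * y ^ 2) ^ 2 * exp (-(c / 2) * (n * y ^ 2))) := by
        rw [Even.pow_abs (by decide)]
        ring_nf
      _ = C * (x ^ 4 * exp (-(c / 2) * x ^ 2)) := by rw [h_sq]; ring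
      _ ≤ _ := le_add_of_nonneg_right (by positivity)
  · rw [rescaledPow, if_neg hx, zero_sub, mul_neg, abs_neg, abs_mul, Nat.abs_cast,
      abs_exp]
    have h_n : n ≤ (δ ^ 2)⁻¹ * x ^ 2 := by
      rw [← h_sq, ← sq_abs (x / _), ← div_eq_inv_mul, le_div_iff₀ (by positivity)]
      gcongr
      exact (not_le.mp hx).le
    have h_exp : exp (-b * x ^ 2) ≤ exp (-(c / 2) * x ^ 2) := by
      rw [exp_le_exp]
      nlinarith [sq_nonneg x]
    calc n * exp (-b * x ^ 2) ≤ (δ ^ 2)⁻¹ * x ^ 2 * exp (-(c / 2) * x ^ 2) := by gcongr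
      _ = (δ ^ 2)⁻¹ * (x ^ 2 * exp (-(c / 2) * x ^ 2)) := mul_assoc ..
      _ ≤ _ := le_add_of_nonneg_left (by positivity)

theorem exists_dominating_rescaledPow (hb : 0 < b) (hc : 0 < c) (hδ : 0 < δ)
    (h_decay : ∀ y ∈ Set.Icc (-δ) δ, |f y| ≤ exp (-c * y ^ 2))
    (hf : (fun y => f y - (exp (-b * y ^ 2) + κ * y ^ 4)) =o[𝓝 0] fun y => y ^ 4) :
    ∃ F : ℝ → ℝ, Integrable F ∧
      ∀ n : ℕ, 2 ≤ n → ∀ x, |(n : ℝ) * (rescaledPow f δ n x - exp (-b * x ^ 2))| ≤ F x := by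
  have h_isBigO : (fun y => f y - exp (-b * y ^ 2)) =O[𝓝 0] fun y => y ^ 4 := by
    refine (hf.isBigO.add (isBigO_const_mul_self κ _ _)).congr_left fun y => ?_
    ring
  have h_two : ∀ y ∈ Set.Icc (-δ) δ, |f y - exp (-b * y ^ 2)| ≤ 2 := fun y hy => by
    have h1 : exp (-c * y ^ 2) ≤ 1 := exp_le_one_iff.mpr (by nlinarith [sq_nonneg y])
    have h2 : exp (-b * y ^ 2) ≤ 1 := exp_le_one_iff.mpr (by nlinarith [sq_nonneg y])
    linarith [abs_sub (f y) (exp (-b * y ^ 2)), abs_exp (-b * y ^ 2), h_decay y hy]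
  obtain ⟨C, hC⟩ := exists_forall_abs_le_mul_pow h_isBigO h_two
  have h_min : 0 < min b c / 2 := by positivity
  refine ⟨_, ((integrable_pow_mul_exp_neg_mul_sq h_min 4).const_mul |C|).add
    ((integrable_pow_mul_exp_neg_mul_sq h_min 2).const_mul (δ ^ 2)⁻¹), fun n hn x => ?_⟩
  refine abs_natCast_mul_rescaledPow_sub_exp_le (by positivity) (min_le_left b c) hδ (abs_nonneg C)
    (fun y hy => (h_decay y hy).trans ?_) (fun y hy => (hC y hy).trans ?_) hn x
  · rw [exp_le_exp]
    nlinarith [sq_nonneg y, min_le_right b c]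
  · gcongr
    exact le_abs_self C

theorem tendsto_laplace_second_order (hb : 0 < b) (hc : 0 < c) (hδ : 0 < δ)
    (h_cont : ContinuousOn f (Set.Icc (-δ) δ))
    (h_decay : ∀ y ∈ Set.Icc (-δ) δ, |f y| ≤ exp (-c * y ^ 2))
    (hf : (fun y => f y - (exp (-b * y ^ 2) + κ * y ^ 4)) =o[𝓝 0] fun y => y ^ 4) :
    Tendsto (fun n : ℕ => (n : ℝ) * (√(n : ℝ) * (∫ t in (-δ)..δ, f t ^ n) - √(π / b))) atTop
      (𝓝 (3 * κ / (4 * b ^ 2) * √(π / b))) := by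
  have h_gauss : Integrable fun x : ℝ => exp (-b * x ^ 2) := integrable_exp_neg_mul_sq hb
  obtain ⟨F, hF, h_dom⟩ := exists_dominating_rescaledPow hb hc hδ h_decay hf
  have h_lim := tendsto_integral_filter_of_dominated_convergence F
    (by
      filter_upwards [eventually_ne_atTop 0] with n hn
      exact (((integrable_rescaledPow h_cont hn).sub h_gauss).const_mul
        (n : ℝ)).aestronglyMeasurable)
    (by
      filter_upwards [eventually_ge_atTop 2] with n hn
      exact .of_forall (h_dom n hn))
    hF
    (.of_forall fun x => tendsto_natCast_mul_rescaledPow_sub_exp hδ hf x)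
  have h_moment : ∫ x : ℝ, κ * x ^ 4 * exp (-b * x ^ 2) = 3 * κ / (4 * b ^ 2) * √(π / b) := by
    simp_rw [mul_assoc κ]
    rw [integral_const_mul, integral_pow_four_mul_exp_neg_mul_sq hb]
    ring
  rw [h_moment] at h_lim
  refine h_lim.congr' ?_
  filter_upwards [eventually_ne_atTop 0] with n hn
  rw [integral_const_mul, integral_sub (integrable_rescaledPow h_cont hn) h_gauss,
    integral_rescaledPow f hδ.le hn, integral_gaussian]

end LaplaceMethod

section CosineLaplace

theorem cos_sub_taylor_isLittleO :
    (fun y : ℝ => cos y - (1 - y ^ 2 / 2 + y ^ 4 / 24)) =o[𝓝 0] fun y => y ^ 4 := by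
  have h_tendsto : Tendsto (fun y : ℝ => (y : ℂ) * Complex.I) (𝓝 0) (𝓝 0) := by
    have h_cont : Continuous fun y : ℝ => (y : ℂ) * Complex.I := by fun_prop
    simpa using h_cont.tendsto 0
  have h_exp := (Complex.exp_sub_sum_range_succ_isLittleO_pow 4).comp_tendsto h_tendsto
  refine ((isBigO_of_le _ fun y => ?_).trans_isLittleO h_exp).trans_isBigO
    (isBigO_of_le _ fun y => ?_)
  · refine (le_of_eq ?_).trans (Complex.abs_re_le_norm _)
    congr 1
    simp only [Function.comp_apply, Complex.sub_re, Complex.exp_ofReal_mul_I_re]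
    congr 1
    simp [Finset.sum_range_succ, Nat.factorial, pow_succ]
    ring
  · simp

theorem exp_neg_mul_sq_sub_taylor_isLittleO (b : ℝ) :
    (fun y : ℝ => exp (-b * y ^ 2) - (1 - b * y ^ 2 + b ^ 2 * y ^ 4 / 2)) =o[𝓝 0]
      fun y => y ^ 4 := by
  have h_tendsto : Tendsto (fun y : ℝ => -b * y ^ 2) (𝓝 0) (𝓝 0) := by
    have h_cont : Continuous fun y : ℝ => -b * y ^ 2 := by fun_prop
    simpa using h_cont.tendsto 0
  have h_exp := (exp_sub_sum_range_succ_isLittleO_pow 2).comp_tendsto h_tendsto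
  refine (h_exp.trans_isBigO (.of_bound (b ^ 2) (.of_forall fun y => ?_))).congr_left fun y => ?_
  · refine le_of_eq ?_
    rw [Function.comp_apply, show (-b * y ^ 2) ^ 2 = b ^ 2 * y ^ 4 by ring, norm_mul,
      norm_of_nonneg (sq_nonneg b)]
  · simp only [Function.comp_apply, Finset.sum_range_succ, Finset.sum_range_zero]
    norm_num [Nat.factorial]
    ring

variable {v : ℝ}

theorem one_sub_mul_one_sub_cos_sub_gaussian_isLittleO (v : ℝ) :
    (fun y : ℝ => 1 - v * (1 - cos y) - (exp (-(v / 2) * y ^ 2) + (v / 24 - v ^ 2 / 8) * y ^ 4))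
      =o[𝓝 0] fun y => y ^ 4 := by
  refine ((cos_sub_taylor_isLittleO.const_mul_left v).sub
    (exp_neg_mul_sq_sub_taylor_isLittleO (v / 2))).congr_left fun y => ?_
  ring

theorem abs_one_sub_mul_one_sub_cos_le (hv0 : 0 ≤ v) (hv1 : v ≤ 1) {y : ℝ}
    (hy : y ∈ Set.Icc (-π) π) :
    |1 - v * (1 - cos y)| ≤ exp (-(2 * v * (1 - v) / π ^ 2) * y ^ 2) := by
  have h_cos : 2 * (y / π) ^ 2 ≤ 1 - cos y := by
    have h := cos_le_one_sub_mul_cos_sq (abs_le.mpr hy)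
    have h_comm : 2 * (y / π) ^ 2 = 2 / π ^ 2 * y ^ 2 := by ring
    linarith
  have h_sq : (y / π) ^ 2 ≤ 1 := by
    rw [sq_le_one_iff_abs_le_one, abs_div, abs_of_pos pi_pos, div_le_one pi_pos]
    exact abs_le.mpr hy
  have h_coef : 0 ≤ v * (1 - v) := mul_nonneg hv0 (by linarith)
  calc |1 - v * (1 - cos y)| ≤ 1 - 2 * (v * (1 - v)) * (y / π) ^ 2 := by
        refine abs_le.mpr ⟨?_, ?_⟩
        -- The factor `1 - v` in the exponent pays for `1 - v * (1 - cos y)` being negative near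
        -- `±π` when `v > 1 / 2`.
        · linarith [mul_le_mul_of_nonneg_left h_sq h_coef, sq_nonneg (1 - v),
            mul_le_mul_of_nonneg_left (neg_one_le_cos y) hv0]
        · linarith [mul_le_mul_of_nonneg_left h_cos hv0,
            mul_nonneg (sq_nonneg v) (sq_nonneg (y / π))]
    _ ≤ exp (-(2 * (v * (1 - v)) * (y / π) ^ 2)) := one_sub_le_exp_neg _
    _ = exp (-(2 * v * (1 - v) / π ^ 2) * y ^ 2) := by congr 1; ring

theorem tendsto_integral_one_sub_mul_one_sub_cos_pow (hv0 : 0 < v) (hv1 : v < 1) :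
    Tendsto (fun n : ℕ =>
      (n : ℝ) * (√(n : ℝ) * (∫ t in (-π)..π, (1 - v * (1 - cos t)) ^ n) - √(2 * π / v))) atTop
      (𝓝 ((1 - 3 * v) / (8 * v) * √(2 * π / v))) := by
  have h_decay : 0 < 2 * v * (1 - v) / π ^ 2 := by
    have : 0 < 1 - v := by linarith
    positivity
  have h_lim := tendsto_laplace_second_order (half_pos hv0) h_decay pi_pos
    (by fun_prop) (fun y hy => abs_one_sub_mul_one_sub_cos_le hv0.le hv1.le hy)
    (one_sub_mul_one_sub_cos_sub_gaussian_isLittleO v)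
  have h_sqrt : π / (v / 2) = 2 * π / v := by field_simp
  have h_coef : 3 * (v / 24 - v ^ 2 / 8) / (4 * (v / 2) ^ 2) = (1 - 3 * v) / (8 * v) := by
    field_simp
    ring
  rwa [h_sqrt, h_coef] at h_lim

end CosineLaplace

section FourierInversion

theorem prod_zpow_eq_zpow_sum {G ι : Type*} [CommGroupWithZero G] {z : G} (hz : z ≠ 0)
    (s : Finset ι) (m : ι → ℤ) : ∏ i ∈ s, z ^ m i = z ^ ∑ i ∈ s, m i := by
  induction s using Finset.induction_on with
  | empty => simp
  | insert a s ha ih => rw [Finset.prod_insert ha, Finset.sum_insert ha, zpow_add₀ hz, ih]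

theorem integral_circleMap_zpow (r : ℝ) (m : ℤ) :
    ∫ t in (-π)..π, circleMap 0 r t ^ m = if m = 0 then (2 * π : ℂ) else 0 := by
  split_ifs with hm
  · simp only [hm, zpow_zero, intervalIntegral.integral_const, sub_neg_eq_add, Complex.real_smul]
    push_cast
    ring
  · have h_freq : (m * Complex.I : ℂ) ≠ 0 := by simp [hm]
    have h_period : Complex.exp (m * Complex.I * π) = Complex.exp (m * Complex.I * (-π : ℝ)) :=
      Complex.exp_eq_exp_iff_exists_int.mpr ⟨m, by push_cast; ring⟩
    have h_polar (t : ℝ) :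
        circleMap 0 r t ^ m = (r : ℂ) ^ m * Complex.exp (m * Complex.I * t) := by
      rw [circleMap_zero, mul_zpow, ← Complex.exp_int_mul]
      ring_nf
    simp_rw [h_polar]
    rw [intervalIntegral.integral_const_mul, integral_exp_mul_complex h_freq, h_period, sub_self,
      zero_div, mul_zero]

theorem iidProb_sum_eq_zero_mul_two_pi {p : ℕ} (P : (Fin p → Bool) → ℝ) (D : (Fin p → Bool) → ℤ)
    {r : ℝ} (hr : r ≠ 0) (n : ℕ) :
    (iidProb P n {xs | ∑ k, D (xs k) = 0} : ℂ) * (2 * π) =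
      ∫ t in (-π)..π, (∑ x, P x * circleMap 0 r t ^ D x) ^ n := by
  have h_ne (t : ℝ) : circleMap 0 r t ≠ 0 := circleMap_ne_center hr
  have h_expand (t : ℝ) : (∑ x, P x * circleMap 0 r t ^ D x) ^ n =
      ∑ xs : Fin n → Fin p → Bool,
        (∏ k, (P (xs k) : ℂ)) * circleMap 0 r t ^ ∑ k, D (xs k) := by
    simp_rw [Fintype.sum_pow, Finset.prod_mul_distrib, prod_zpow_eq_zpow_sum (h_ne t)]
  have h_cont (m : ℤ) : Continuous fun t => circleMap 0 r t ^ m :=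
    (continuous_circleMap 0 r).zpow₀ m fun t => .inl (h_ne t)
  simp_rw [h_expand]
  rw [intervalIntegral.integral_finsetSum
    fun xs _ => ((h_cont _).const_mul _).intervalIntegrable _ _]
  simp_rw [intervalIntegral.integral_const_mul, integral_circleMap_zpow]
  rw [iidProb, Complex.ofReal_sum, Finset.sum_mul]
  refine Finset.sum_congr rfl fun xs _ => ?_
  simp only [Set.mem_ofPred_eq]
  split_ifs <;> simp

end FourierInversion

section Chain

/-- The difference of the agreement indicators of the pairs `{i, j}` and `{k, l}` in one sample; its
sum over the samples vanishes exactly when the two empirical agreement weights tie. -/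
def agreementDiff {p : ℕ} (i j k l : Fin p) (x : Fin p → Bool) : ℤ :=
  (if x i = x j then 1 else 0) - (if x k = x l then 1 else 0)

theorem Ahat_eq_Ahat_iff {p n : ℕ} (xs : Fin n → Fin p → Bool) (i j k l : Fin p) :
    Ahat xs i j = Ahat xs k l ↔ ∑ m, agreementDiff i j k l (xs m) = 0 := by
  rcases eq_or_ne n 0 with rfl | hn
  · simp [Ahat]
  · rw [Ahat, Ahat, div_left_inj' (Nat.cast_ne_zero.mpr hn), Nat.cast_inj]
    simp only [agreementDiff, Finset.sum_sub_distrib, sub_eq_zero, Finset.sum_boole]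
    norm_cast

theorem edgeFinset_chainA : chainA.edgeFinset = {s(0, 1), s(1, 2)} := by
  ext e
  have h_diag : e = s(0, 1) ∨ e = s(1, 2) → ¬ e.IsDiag := by rintro (rfl | rfl) <;> simp
  rw [SimpleGraph.mem_edgeFinset, chainA, SimpleGraph.edgeSet_fromEdgeSet]
  simpa only [Set.mem_sdiff, Set.mem_insert_iff, Set.mem_singleton_iff, Sym2.mem_diagSet,
    Finset.mem_insert, Finset.mem_singleton, and_iff_left_iff_imp] using h_diag

theorem sum_fin_three_arrow {α M : Type*} [Fintype α] [AddCommMonoid M] (g : (Fin 3 → α) → M) :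
    ∑ x, g x = ∑ a, ∑ b, ∑ c, g ![a, b, c] := by
  let e : α × α × α ≃ (Fin 3 → α) :=
    { toFun := fun y => ![y.1, y.2.1, y.2.2]
      invFun := fun x => (x 0, x 1, x 2)
      left_inv := fun _ => rfl
      right_inv := fun x => by ext i; fin_cases i <;> rfl }
  rw [← e.sum_comp]
  simp only [Fintype.sum_prod_type]
  rfl

theorem isingP_chainA (θ : ℝ) (x : Fin 3 → Bool) :
    isingP θ chainA x =
      1 / 2 * ((if x 0 = x 1 then 1 - θ else θ) * (if x 1 = x 2 then 1 - θ else θ)) := by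
  rw [isingP, edgeFinset_chainA, Finset.prod_pair (by decide)]
  rfl

theorem sum_isingP_chainA_mul_zpow (θ : ℝ) (ζ : ℂ) :
    ∑ x, isingP θ chainA x * ζ ^ agreementDiff 0 2 0 1 x =
      (1 - θ) + (θ ^ 2 * ζ + θ * (1 - θ) * ζ⁻¹) := by
  rw [sum_fin_three_arrow]
  simp [isingP_chainA, agreementDiff]
  ring

variable {θ : ℝ}

theorem sqrt_four_mul_mul_one_sub (hθ0 : 0 < θ) (hθ1 : θ < 1) :
    √(4 * θ * (1 - θ)) = 2 * θ * √((1 - θ) / θ) := by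
  have h_sub : 0 < 1 - θ := by linarith
  rw [sqrt_eq_iff_mul_self_eq (by positivity) (by positivity), mul_mul_mul_comm,
    mul_self_sqrt (by positivity)]
  field_simp
  ring

theorem sum_isingP_chainA_mul_circleMap_zpow (hθ0 : 0 < θ) (hθ1 : θ < 1) (t : ℝ) :
    ∑ x, isingP θ chainA x * circleMap 0 √((1 - θ) / θ) t ^ agreementDiff 0 2 0 1 x =
      ((1 - θ + θ * √(4 * θ * (1 - θ)) * cos t : ℝ) : ℂ) := by
  have h_sub : 0 < 1 - θ := by linarith
  set r := √((1 - θ) / θ) with hr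
  have hr0 : 0 < r := by positivity
  have h_balance : θ * (1 - θ) * r⁻¹ = θ ^ 2 * r := by
    have : r ^ 2 = (1 - θ) / θ := sq_sqrt (by positivity)
    field_simp
    rw [this]
    field_simp
  have h_balance' : (θ * (1 - θ) * (r : ℂ)⁻¹) = θ ^ 2 * r := by exact_mod_cast h_balance
  rw [sum_isingP_chainA_mul_zpow, circleMap_zero, mul_inv, ← Complex.exp_neg, ← mul_assoc,
    ← mul_assoc, h_balance', sqrt_four_mul_mul_one_sub hθ0 hθ1, ← hr]
  push_cast
  rw [Complex.cos]
  ring_nf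

theorem one_sub_mul_one_sub_sqrt_pos (hθ0 : 0 < θ) (hθ1 : θ < 1) :
    0 < 1 - θ * (1 - √(4 * θ * (1 - θ))) := by
  nlinarith [mul_nonneg hθ0.le (sqrt_nonneg (4 * θ * (1 - θ)))]

theorem exp_neg_Kexp (hθ0 : 0 < θ) (hθ1 : θ < 1) :
    exp (-Kexp θ) = 1 - θ * (1 - √(4 * θ * (1 - θ))) := by
  rw [Kexp, neg_neg, exp_log (one_sub_mul_one_sub_sqrt_pos hθ0 hθ1)]

theorem exp_neg_Kexp_mul_sigmaSq (θ : ℝ) :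
    exp (-Kexp θ) * sigmaSq θ = θ * √(4 * θ * (1 - θ)) := by
  rw [sigmaSq, mul_left_comm, ← exp_add, neg_add_cancel, exp_zero, mul_one]

theorem sigmaSq_pos (hθ0 : 0 < θ) (hθ1 : θ < 1) : 0 < sigmaSq θ := by
  have : 0 < 1 - θ := by linarith
  unfold sigmaSq
  positivity

theorem sigmaSq_lt_one (hθ0 : 0 < θ) (hθ1 : θ < 1) : sigmaSq θ < 1 := by
  refine lt_of_mul_lt_mul_left ?_ (exp_pos (-Kexp θ)).le
  rw [exp_neg_Kexp_mul_sigmaSq, exp_neg_Kexp hθ0 hθ1]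
  linarith

theorem iidProb_tie_eq_integral (hθ0 : 0 < θ) (hθ1 : θ < 1) (n : ℕ) :
    iidProb (isingP θ chainA) n {xs | Ahat xs 0 2 = Ahat xs 0 1} =
      exp (-n * Kexp θ) * (∫ t in (-π)..π, (1 - sigmaSq θ * (1 - cos t)) ^ n) / (2 * π) := by
  have h_factor (t : ℝ) : 1 - θ + θ * √(4 * θ * (1 - θ)) * cos t =
      exp (-Kexp θ) * (1 - sigmaSq θ * (1 - cos t)) := by
    linear_combination -exp_neg_Kexp hθ0 hθ1 + (1 - cos t) * exp_neg_Kexp_mul_sigmaSq θ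
  have h_pow : exp (-n * Kexp θ) = exp (-Kexp θ) ^ n := by
    rw [← exp_nat_mul, neg_mul_comm]
  have hr : √((1 - θ) / θ) ≠ 0 := (sqrt_pos.mpr (div_pos (by linarith) hθ0)).ne'
  have h_fourier := iidProb_sum_eq_zero_mul_two_pi (isingP θ chainA) (agreementDiff 0 2 0 1) hr n
  simp_rw [sum_isingP_chainA_mul_circleMap_zpow hθ0 hθ1, h_factor,
    ← Complex.ofReal_pow] at h_fourier
  rw [intervalIntegral.integral_ofReal] at h_fourier
  simp_rw [Ahat_eq_Ahat_iff]
  rw [eq_div_iff (by positivity), h_pow, ← intervalIntegral.integral_const_mul]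
  simp_rw [← mul_pow]
  exact_mod_cast h_fourier

theorem iidProb_tie_div_ftilde (hθ0 : 0 < θ) (hθ1 : θ < 1) (n : ℕ) :
    iidProb (isingP θ chainA) n {xs | Ahat xs 0 2 = Ahat xs 0 1} / ftilde θ n =
      √(n : ℝ) * (∫ t in (-π)..π, (1 - sigmaSq θ * (1 - cos t)) ^ n) /
        (√(2 * π / sigmaSq θ) * (1 + (1 - 3 * sigmaSq θ) / (8 * sigmaSq θ) / n)) := by
  have hσ := sigmaSq_pos hθ0 hθ1
  have h_mul : √(2 * π * sigmaSq θ) * √(2 * π / sigmaSq θ) = 2 * π := by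
    rw [← sqrt_mul (by positivity), sqrt_eq_iff_mul_self_eq (by positivity) (by positivity)]
    field_simp
  have h_sqrt : √(2 * π * sigmaSq θ * n) = 2 * π / √(2 * π / sigmaSq θ) * √(n : ℝ) := by
    rw [sqrt_mul (by positivity), eq_div_of_mul_eq (by positivity) h_mul]
  rw [iidProb_tie_eq_integral hθ0 hθ1, ftilde, h_sqrt, div_div _ (8 * sigmaSq θ)]
  field_simp

end Chain

theorem stmt9_general (θ : ℝ) (hθ0 : 0 < θ) (hθ1 : θ < 1) :
    Tendsto (fun n : ℕ =>
      (n : ℝ) * (iidProb (isingP θ chainA) n {xs | Ahat xs 0 2 = Ahat xs 0 1} / ftilde θ n - 1))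
      atTop (𝓝 0) := by
  have hσ := sigmaSq_pos hθ0 hθ1
  have h_laplace := tendsto_integral_one_sub_mul_one_sub_cos_pow hσ (sigmaSq_lt_one hθ0 hθ1)
  simp_rw [iidProb_tie_div_ftilde hθ0 hθ1]
  exact tendsto_natCast_mul_div_sub_one (by positivity) _ h_laplace

end

/-- exact asymptotics of the tie probability `ℙ(Â_{1,3} = Â_{1,2})`
for the 3-node chain: `ℙ = f̃(n)(1 + o(n⁻¹))`. -/
theorem stmt9 (θ : ℝ) (hθ0 : 0 < θ) (hθ1 : θ < 1 / 2) :
    Filter.Tendsto (fun n : ℕ =>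
      (n : ℝ) * (iidProb (isingP θ chainA) n {xs | Ahat xs 0 2 = Ahat xs 0 1} / ftilde θ n - 1))
      Filter.atTop (nhds 0) :=
  stmt9_general θ hθ0 (by linarith)
end
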